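/- Under the standing assumptions, let x₀ ∈ X, let A, B > 0 with B ≥ 4λ²A, let k ≥ 2 be the largest integer with B ≥ 2^k λ² A, and set U₁ = B̄_d(x₀, λA) and U₂ = X ∖ B_d(x₀, B/λ). Then the conformal modulus in (X,q) of the family of paths joining U₁ and U₂ in X satisfies mod(U₁,U₂;X) ≤ 2π C_W² C_S² C_D⁶ / k, where C_S = 16 C_W C_D^{28+16⌈log₂ λ⌉} and the modulus is computed with respect to q-length of paths and the Hausdorff 2-measure H²_q of (X,q). -/

import Mathlib

open Metric MeasureTheory Set Filter Topology UniformSpace ENNReal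
open scoped NNReal

noncomputable section

/-- The set `B_{xy} = B(x, d(x,y)) ∪ B(y, d(x,y))`. -/
def pairBall {X : Type*} [MetricSpace X] (x y : X) : Set X :=
  Metric.ball x (dist x y) ∪ Metric.ball y (dist x y)

/-- A `δ`-chain from `x` to `y`: a finite sequence `z 0 = x, …, z m = y` with
consecutive distances at most `δ`. -/
def IsDeltaChain {X : Type*} [MetricSpace X] (δ : ℝ) (x y : X) (z : ℕ → X) (m : ℕ) : Prop :=
  z 0 = x ∧ z m = y ∧ ∀ j < m, dist (z j) (z (j + 1)) ≤ δ

/-- `q^δ_{μ,s}(x,y)`: infimum of `∑ μ(B_{x_j x_{j-1}})^{1/s}` over `δ`-chains from `x` to `y`. -/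
def qDelta {X : Type*} [MetricSpace X] [MeasurableSpace X]
    (μ : Measure X) (s δ : ℝ) (x y : X) : ℝ≥0∞ :=
  ⨅ (m : ℕ) (z : ℕ → X) (_ : IsDeltaChain δ x y z m),
    ∑ j ∈ Finset.range m, μ (pairBall (z j) (z (j + 1))) ^ (1 / s)

/-- `q_{μ,s}(x,y) = limsup_{δ → 0⁺} q^δ_{μ,s}(x,y)`. -/
def qmu {X : Type*} [MetricSpace X] [MeasurableSpace X]
    (μ : Measure X) (s : ℝ) (x y : X) : ℝ≥0∞ :=
  Filter.limsup (fun δ => qDelta μ s δ x y) (nhdsWithin (0 : ℝ) (Set.Ioi 0))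

/-- `μ` is a doubling measure with constant `CD`: balls have positive finite measure and
`μ(B(x,2r)) ≤ CD · μ(B(x,r))`. -/
def IsDoublingWith {X : Type*} [MetricSpace X] [MeasurableSpace X]
    (μ : Measure X) (CD : ℝ≥0) : Prop :=
  (∀ (x : X) (r : ℝ), 0 < r → 0 < μ (Metric.ball x r) ∧ μ (Metric.ball x r) < ⊤) ∧
    ∀ (x : X) (r : ℝ), 0 < r → μ (Metric.ball x (2 * r)) ≤ CD * μ (Metric.ball x r)

/-- `μ` is a `CW`-weak metric doubling measure of dimension `s`:
`μ(B_{xy})^{1/s} ≤ CW · q_{μ,s}(x,y)` for all `x, y`. -/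
def IsWMDM {X : Type*} [MetricSpace X] [MeasurableSpace X]
    (μ : Measure X) (s : ℝ) (CW : ℝ≥0) : Prop :=
  ∀ x y : X, μ (pairBall x y) ^ (1 / s) ≤ CW * qmu μ s x y

/-- A continuum is a compact connected set. -/
def IsContinuum {X : Type*} [TopologicalSpace X] (K : Set X) : Prop :=
  IsCompact K ∧ IsConnected K

/-- `X` is `λ`-linearly locally connected. -/
def IsLLC (X : Type*) [MetricSpace X] (lam : ℝ) : Prop :=
  ∀ (x : X) (r : ℝ), 0 < r →
    (∀ y ∈ Metric.ball x r, ∀ z ∈ Metric.ball x r,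
      ∃ K : Set X, IsContinuum K ∧ K ⊆ Metric.ball x (lam * r) ∧ y ∈ K ∧ z ∈ K) ∧
    (∀ y z : X, y ∉ Metric.ball x r → z ∉ Metric.ball x r →
      ∃ K : Set X, IsContinuum K ∧ K ⊆ (Metric.ball x (r / lam))ᶜ ∧ y ∈ K ∧ z ∈ K)

/-- The sphere `S²`, with the metric inherited from `ℝ³`. -/
abbrev Sphere2 : Set (EuclideanSpace ℝ (Fin 3)) := Metric.sphere 0 1

/-- A circle domain in `S²`: an open connected set each of whose complementary
connected components is a point or a round closed disk (a closed metric ball). -/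
def IsCircleDomainS2 (Ω : Set ↥Sphere2) : Prop :=
  IsOpen Ω ∧ IsConnected Ω ∧ ∀ p ∈ Ωᶜ,
    connectedComponentIn Ωᶜ p = {p} ∨
      ∃ (c : ↥Sphere2) (ρ : ℝ), 0 < ρ ∧ connectedComponentIn Ωᶜ p = Metric.closedBall c ρ

/-- A circle domain in the plane. -/
def IsCircleDomainC (Ω : Set ℂ) : Prop :=
  IsOpen Ω ∧ IsConnected Ω ∧ ∀ p ∈ Ωᶜ,
    connectedComponentIn Ωᶜ p = {p} ∨
      ∃ (c : ℂ) (ρ : ℝ), 0 < ρ ∧ connectedComponentIn Ωᶜ p = Metric.closedBall c ρ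

/-- The residual set `X̄ ∖ X` inside the completion of `X`. -/
def resid (X : Type*) [MetricSpace X] : Set (Completion X) :=
  (Set.range ((↑) : X → Completion X))ᶜ

/-- The collection of connected components of `X̄ ∖ X`. -/
def residComps (X : Type*) [MetricSpace X] : Set (Set (Completion X)) :=
  {C | ∃ p ∈ resid X, C = connectedComponentIn (resid X) p}

/-- Distance between two sets. -/
def setSetDist {Z : Type*} [MetricSpace Z] (A B : Set Z) : ℝ :=
  sInf (Set.image2 dist A B)

/-- `f` is `η`-quasisymmetric, for a homeomorphism `η` of `[0,∞)`. -/
def IsQSWith {X Y : Type*} [MetricSpace X] [MetricSpace Y]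
    (η : ℝ≥0 ≃ₜ ℝ≥0) (f : X → Y) : Prop :=
  ∀ x y z : X, x ≠ z →
    nndist (f x) (f y) ≤ η (nndist x y / nndist x z) * nndist (f x) (f z)

/-- `ℓ = ⌈log₂ λ⌉`. -/
def ellOf (lam : ℝ) : ℕ := (Int.ceil (Real.logb 2 lam)).toNat

/-- The constant `C_S = 16 C_W C_D^{28+16⌈log₂ λ⌉}`. -/
def CSconst (lam : ℝ) (CD CW : ℝ≥0) : ℝ≥0∞ :=
  16 * (CW : ℝ≥0∞) * (CD : ℝ≥0∞) ^ (28 + 16 * ellOf lam)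

/-- `K` separates `A` and `B`: `A` and `B` lie in different components of the complement of `K`. -/
def SeparatesSets {X : Type*} [TopologicalSpace X] (K A B : Set X) : Prop :=
  A ⊆ Kᶜ ∧ B ⊆ Kᶜ ∧
    ∀ p ∈ A, ∀ p' ∈ B, connectedComponentIn Kᶜ p ≠ connectedComponentIn Kᶜ p'

/-- A topological disk: a set homeomorphic to an open disk in the plane. -/
def IsTopDisk {X : Type*} [TopologicalSpace X] (U : Set X) : Prop :=
  Nonempty (↥U ≃ₜ ↥(Metric.ball (0 : ℂ) 1))

/-- Lower line integral `∫_γ ρ ds` over `γ : [a,b] → Y`, as a supremum of lower sums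
over partitions of `[a,b]`. -/
def lowerLineIntegral {Y : Type*} [PseudoEMetricSpace Y]
    (ρ : Y → ℝ≥0∞) (γ : ℝ → Y) (a b : ℝ) : ℝ≥0∞ :=
  ⨆ (n : ℕ) (t : ℕ → ℝ) (_ : t 0 = a) (_ : t n = b) (_ : ∀ j < n, t j ≤ t (j + 1)),
    ∑ j ∈ Finset.range n,
      (⨅ u ∈ Set.Icc (t j) (t (j + 1)), ρ (γ u)) * edist (γ (t j)) (γ (t (j + 1)))

/-- `γ` (with parameter interval `[0,1]`) is locally rectifiable on the open interval `(0,1)`. -/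
def LocRectifiableOn {Y : Type*} [PseudoEMetricSpace Y] (γ : ℝ → Y) : Prop :=
  ∀ c d : ℝ, 0 < c → c ≤ d → d < 1 → eVariationOn γ (Set.Icc c d) < ⊤

/-- The line integral of `ρ` over the open part of `γ`. -/
def openLineIntegral {Y : Type*} [PseudoEMetricSpace Y] (ρ : Y → ℝ≥0∞) (γ : ℝ → Y) : ℝ≥0∞ :=
  ⨆ (c : ℝ) (d : ℝ) (_ : 0 < c) (_ : c ≤ d) (_ : d < 1), lowerLineIntegral ρ γ c d

/-- `ρ` is admissible for the path family `Γ`. -/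
def IsAdmissible {Y : Type*} [PseudoEMetricSpace Y] (Γ : Set (ℝ → Y)) (ρ : Y → ℝ≥0∞) : Prop :=
  ∀ γ ∈ Γ, LocRectifiableOn γ → 1 ≤ openLineIntegral ρ γ

def borelSpaceBorel (Y : Type*) [TopologicalSpace Y] : @BorelSpace Y _ (borel Y) :=
  @BorelSpace.mk Y _ (borel Y) rfl

/-- The Hausdorff 2-measure of a metric space, normalized to coincide with Lebesgue measure
in the Euclidean plane. -/
def hausdorff2 (Y : Type*) [EMetricSpace Y] : @Measure Y (borel Y) :=
  ENNReal.ofReal (Real.pi / 4) •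
    @Measure.hausdorffMeasure Y _ (borel Y) (borelSpaceBorel Y) 2

/-- The conformal modulus of a path family in a metric space, with respect to the
(normalized) Hausdorff 2-measure. -/
def modulusH2 {Y : Type*} [EMetricSpace Y] (Γ : Set (ℝ → Y)) : ℝ≥0∞ :=
  ⨅ (ρ : Y → ℝ≥0∞) (_ : @Measurable Y ℝ≥0∞ (borel Y) _ ρ) (_ : IsAdmissible Γ ρ),
    @MeasureTheory.lintegral Y (borel Y) (hausdorff2 Y) fun y => ρ y ^ 2

/-- The conformal modulus of a path family in the plane, with respect to Lebesgue area measure. -/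
def modulusC (Γ : Set (ℝ → ℂ)) : ℝ≥0∞ :=
  ⨅ (ρ : ℂ → ℝ≥0∞) (_ : Measurable ρ) (_ : IsAdmissible Γ ρ), ∫⁻ z, ρ z ^ 2

/-- A homeomorphism between metric spaces is `K`-quasiconformal if it distorts moduli of
path families by a factor of at most `K` in both directions. -/
def IsQCWith {Y Z : Type*} [EMetricSpace Y] [EMetricSpace Z] (K : ℝ≥0∞) (f : Y ≃ₜ Z) : Prop :=
  ∀ Γ : Set (ℝ → Y),
    modulusH2 ((fun γ => (f : Y → Z) ∘ γ) '' Γ) ≤ K * modulusH2 Γ ∧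
      modulusH2 Γ ≤ K * modulusH2 ((fun γ => (f : Y → Z) ∘ γ) '' Γ)

/-- The family `Γ(A,B;G)` of paths joining `A` and `B` in `G` (parameter interval `[0,1]`). -/
def joinPaths (A B G : Set ℂ) : Set (ℝ → ℂ) :=
  {γ | ContinuousOn γ (Set.Icc 0 1) ∧ γ 0 ∈ A ∧ γ 1 ∈ B ∧
    γ 0 ∈ closure G ∧ γ 1 ∈ closure G ∧ ∀ u ∈ Set.Ioo (0 : ℝ) 1, γ u ∈ G}

/-- The constant `α = 2^{−2−2M−π²C_W²C_D^{1+log₂ C_X}/(8 log 2)}`. -/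
def alphaConst (M : ℕ) (CD CW : ℝ≥0) (CX : ℝ) : ℝ :=
  (2 : ℝ) ^ (-2 - 2 * (M : ℝ) -
    Real.pi ^ 2 * (CW : ℝ) ^ 2 * (CD : ℝ) ^ ((1 : ℝ) + Real.logb 2 CX) / (8 * Real.log 2))

/-!
The weak metric doubling property bounds `q(p, p')` below by a multiple of `μ(B)^{1/2}` for balls
`B` of radius `d(p, p')`. The substance of the theorem is a converse inside a planar chart:
`q(x, y) ≤ 8 C_W C_D^{7 + ℓ} μ(B(x, r))^{1/2}` for `y ∈ B(x, r)`, where `ℓ = ⌈log₂ λ⌉`. Let `D` be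
the potential `q^δ(B(x, η), ·)` on a `δ`-net. In going from `x` to `y` one crosses every level set
of `D`, so its points, fattened to balls, separate `x` from `y`. By Janiszewski's theorem, a single
`δ`-chain in the level set already separates them or reaches far away. By linear local connectivity
this chain is as large as its distance to `x` or to `y`, and the lower bound for `q` forces
`∑ w(p) K(p) ≳ 1` over the level set, where `w(p) ≈ μ(B(p, δ))^{1/2}` and
`K(p) = μ(B(x, d(x, p)))^{-1/2} + μ(B(y, d(y, p)))^{-1/2}`. Since `D` varies by at most `w` between
neighbours, integrating over the levels gives `D(y) ≲ ∑ w(p)² K(p)`, and this sum, a discretization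
of `∫ K dμ`, is at most a multiple of `μ(B(x, r))^{1/2}`.

Hence small balls satisfy `diam_q(B)² ≲ μ(B)`, and a Vitali covering yields `H²_q ≲ μ`. A path
joining the two sets crosses `k` dyadic shells; on each of them take the constant density for which
every crossing has length at least `1 / k`. Its energy on a single shell is `≲ k⁻²`, so the total
energy is `≲ k · k⁻²`.
-/

/-! ### Separation of points in the plane -/

section Separation

/-- The points `x` and `y` are separated by `K`: the complement of `K` is the union of two
disjoint open sets, one containing `x` and the other `y`. -/
def Separates {Z : Type*} [TopologicalSpace Z] (K : Set Z) (x y : Z) : Prop :=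
  ∃ U V : Set Z, IsOpen U ∧ IsOpen V ∧ Disjoint U V ∧ U ∪ V = Kᶜ ∧ x ∈ U ∧ y ∈ V

variable {Z : Type*} [TopologicalSpace Z] {K K' K₁ K₂ L : Set Z} {x y : Z}

namespace Separates

theorem symm (h : Separates K x y) : Separates K y x := by
  obtain ⟨U, V, hU, hV, hUV, hc, hx, hy⟩ := h
  exact ⟨V, U, hV, hU, hUV.symm, by rw [union_comm, hc], hy, hx⟩

theorem left_notMem (h : Separates K x y) : x ∉ K := by
  obtain ⟨U, V, -, -, -, hc, hx, -⟩ := h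
  exact hc.subset (Or.inl hx)

theorem right_notMem (h : Separates K x y) : y ∉ K :=
  h.symm.left_notMem

theorem mono (h : Separates K x y) (hKK' : K ⊆ K') (hK' : IsClosed K') (hx : x ∉ K')
    (hy : y ∉ K') : Separates K' x y := by
  obtain ⟨U, V, hU, hV, hUV, hc, hxU, hyV⟩ := h
  refine ⟨U \ K', V \ K', hU.sdiff hK', hV.sdiff hK', hUV.mono sdiff_subset sdiff_subset, ?_,
    ⟨hxU, hx⟩, ⟨hyV, hy⟩⟩
  rw [← union_sdiff_distrib, hc, sdiff_eq, ← compl_union, union_eq_right.2 hKK']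

theorem inter_nonempty (h : Separates K x y) (hL : IsPreconnected L) (hx : x ∈ L) (hy : y ∈ L) :
    (L ∩ K).Nonempty := by
  obtain ⟨U, V, hU, hV, hUV, hc, hxU, hyV⟩ := h
  by_contra hempty
  have hLK : L ⊆ U ∪ V := by
    rw [hc, subset_compl_iff_disjoint_right, disjoint_iff_inter_eq_empty]
    exact not_nonempty_iff_eq_empty.1 hempty
  obtain ⟨z, -, hzU, hzV⟩ := hL U V hU hV hLK ⟨x, hx, hxU⟩ ⟨y, hy, hyV⟩
  exact hUV.notMem_of_mem_left hzU hzV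

end Separates

theorem separates_of_circleExp_eq_one (hK : IsClosed K) {g : Z → ℝ} (hg : ContinuousOn g Kᶜ)
    (hexp : ∀ z, Circle.exp (g z) = 1) (hx : x ∉ K) (hy : y ∉ K) (hxy : g x ≠ g y) :
    Separates K x y := by
  refine ⟨Kᶜ ∩ g ⁻¹' Metric.ball (g x) (2 * Real.pi), Kᶜ ∩ g ⁻¹' {g x}ᶜ,
    hg.isOpen_inter_preimage hK.isOpen_compl isOpen_ball,
    hg.isOpen_inter_preimage hK.isOpen_compl isOpen_compl_singleton, ?_, ?_,
    ⟨hx, mem_ball_self Real.two_pi_pos⟩, ⟨hy, hxy.symm⟩⟩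
  · rw [Set.disjoint_left]
    rintro z ⟨-, hz⟩ ⟨-, hne⟩
    obtain ⟨n, hn⟩ : ∃ n : ℤ, g z - g x = n * (2 * Real.pi) := by
      rw [← Circle.exp_eq_one, Circle.exp_sub, hexp, hexp, div_one]
    have hlt : |(n : ℝ)| * (2 * Real.pi) < 1 * (2 * Real.pi) := by
      rwa [one_mul, ← abs_of_pos Real.two_pi_pos, ← abs_mul, ← hn,
        abs_of_pos Real.two_pi_pos, ← Real.dist_eq]
    have hn0 : n = 0 := Int.abs_lt_one_iff.1 (by
      exact_mod_cast lt_of_mul_lt_mul_right hlt Real.two_pi_pos.le)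
    exact hne (sub_eq_zero.1 (by rw [hn, hn0, Int.cast_zero, zero_mul]))
  · rw [← inter_union_distrib_left, inter_eq_left]
    intro z _
    by_cases hz : g z = g x
    · exact Or.inl (by simp [hz, Real.pi_pos])
    · exact Or.inr hz

theorem exists_continuous_circleExp_eq [SimplyConnectedSpace Z] [LocallyPathConnectedSpace Z]
    {f : Z → Circle} (hf : Continuous f) :
    ∃ θ : Z → ℝ, Continuous θ ∧ ∀ z, Circle.exp (θ z) = f z := by
  obtain ⟨z₀⟩ : Nonempty Z := inferInstance
  obtain ⟨θ, ⟨-, hθ⟩, -⟩ := Circle.isCoveringMap_exp.existsUnique_continuousMap_lifts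
    (⟨f, hf⟩ : C(Z, Circle)) z₀ (Complex.arg (f z₀)) (Circle.exp_arg _)
  exact ⟨θ, θ.continuous, congrFun hθ⟩

theorem frontier_subset_of_disjoint_union_eq_compl {U V : Set Z} (hU : IsOpen U) (hV : IsOpen V)
    (hUV : Disjoint U V) (hc : U ∪ V = Kᶜ) : frontier V ⊆ K := by
  intro z hz
  rw [hV.frontier_eq] at hz
  by_contra hzK
  rcases hc.superset hzK with hzU | hzV
  · exact (hUV.closure_right hU).notMem_of_mem_left hzU hz.1
  · exact hz.2 hzV

theorem exists_continuousOn_compl_sub_eq_indicator [NormalSpace Z] (h₁ : IsClosed K₁)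
    (h₂ : IsClosed K₂) (hdisj : Disjoint K₁ K₂) {V : Set Z} (hV : frontier V ⊆ K₁ ∪ K₂) (c : ℝ) :
    ∃ w₁ w₂ : Z → ℝ, ContinuousOn w₁ K₁ᶜ ∧ ContinuousOn w₂ K₂ᶜ ∧
      ∀ z, w₁ z - w₂ z = V.indicator (fun _ => c) z := by
  classical
  obtain ⟨u, hu₁, hu₂, -⟩ := exists_continuous_zero_one_of_isClosed h₁ h₂ hdisj
  refine ⟨fun z => if z ∈ V then c - c / 2 * u z else c / 2 * u z,
    fun z => if z ∈ V then -(c / 2 * u z) else c / 2 * u z,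
    ContinuousOn.if ?_ (by fun_prop) (by fun_prop), ContinuousOn.if ?_ (by fun_prop) (by fun_prop),
    fun z => ?_⟩
  · rintro z ⟨hz₁, hz⟩
    have huz : u z = 1 := hu₂ ((hV hz).resolve_left hz₁)
    rw [huz]
    ring
  · rintro z ⟨hz₂, hz⟩
    have huz : u z = 0 := hu₁ ((hV hz).resolve_right hz₂)
    rw [huz]
    ring
  · by_cases hz : z ∈ V
    · simp [hz]
    · simp [hz]

/-- Janiszewski's theorem: if `w₁` and `w₂` differ by `2π` on the side of `y`, they induce the
same circle-valued map, whose lift `θ` makes `θ - w₁` and `θ - w₂` locally constant; at least one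
of them distinguishes `x` from `y`. -/
theorem Separates.of_union [NormalSpace Z] [SimplyConnectedSpace Z] [LocallyPathConnectedSpace Z]
    (h₁ : IsClosed K₁) (h₂ : IsClosed K₂) (hdisj : Disjoint K₁ K₂)
    (h : Separates (K₁ ∪ K₂) x y) : Separates K₁ x y ∨ Separates K₂ x y := by
  have hxK := h.left_notMem
  have hyK := h.right_notMem
  obtain ⟨U, V, hU, hV, hUV, hc, hxU, hyV⟩ := h
  obtain ⟨w₁, w₂, hw₁, hw₂, hw⟩ := exists_continuousOn_compl_sub_eq_indicator h₁ h₂ hdisj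
    (frontier_subset_of_disjoint_union_eq_compl hU hV hUV hc) (2 * Real.pi)
  have hexp : ∀ z, Circle.exp (w₁ z) = Circle.exp (w₂ z) := fun z => by
    rw [← div_eq_one, ← Circle.exp_sub, hw]
    by_cases hz : z ∈ V <;> simp [hz]
  have hcont : Continuous fun z => Circle.exp (w₂ z) := by
    rw [← continuousOn_univ, ← compl_empty, ← disjoint_iff_inter_eq_empty.1 hdisj, compl_inter]
    refine ContinuousOn.union_of_isOpen ?_ (Circle.exp.continuous.comp_continuousOn hw₂)
      h₁.isOpen_compl h₂.isOpen_compl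
    exact (Circle.exp.continuous.comp_continuousOn hw₁).congr fun z _ => (hexp z).symm
  obtain ⟨θ, hθ, hθexp⟩ := exists_continuous_circleExp_eq hcont
  by_cases hne : θ x - w₁ x = θ y - w₁ y
  · refine Or.inr <| separates_of_circleExp_eq_one h₂ (g := fun z => θ z - w₂ z)
      (hθ.continuousOn.sub hw₂) (fun z => by rw [Circle.exp_sub, hθexp, div_self'])
      (fun hx => hxK (Or.inr hx)) (fun hy => hyK (Or.inr hy)) fun heq => ?_
    have hwx := hw x
    have hwy := hw y
    rw [indicator_of_notMem (hUV.notMem_of_mem_left hxU)] at hwx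
    rw [indicator_of_mem hyV] at hwy
    linarith [Real.two_pi_pos]
  · exact Or.inl <| separates_of_circleExp_eq_one h₁ (g := fun z => θ z - w₁ z)
      (hθ.continuousOn.sub hw₁) (fun z => by rw [Circle.exp_sub, hθexp, ← hexp, div_self'])
      (fun hx => hxK (Or.inl hx)) (fun hy => hyK (Or.inl hy)) hne

theorem isPreconnected_compl_closedBall_zero {E : Type*} [NormedAddCommGroup E] [NormedSpace ℝ E]
    (hE : 1 < Module.rank ℝ E) {r : ℝ} (hr : 0 ≤ r) : IsPreconnected (closedBall (0 : E) r)ᶜ := by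
  have himage : (fun p : ℝ × E => p.1 • p.2) '' (Ioi r ×ˢ sphere 0 1) = (closedBall 0 r)ᶜ := by
    ext z
    simp only [mem_image, mem_prod, mem_Ioi, mem_sphere_zero_iff_norm, Prod.exists, mem_compl_iff,
      mem_closedBall_zero_iff, not_le]
    constructor
    · rintro ⟨t, v, ⟨ht, hv⟩, rfl⟩
      rwa [norm_smul, hv, mul_one, Real.norm_of_nonneg (hr.trans ht.le)]
    · intro hz
      have hz0 : ‖z‖ ≠ 0 := (hr.trans_lt hz).ne'
      exact ⟨‖z‖, ‖z‖⁻¹ • z, ⟨hz, by rw [norm_smul, norm_inv, norm_norm, inv_mul_cancel₀ hz0]⟩,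
        smul_inv_smul₀ hz0 z⟩
  rw [← himage]
  exact (isPreconnected_Ioi.prod (isPreconnected_sphere hE 0 1)).image _ (by fun_prop)

theorem separates_image_of_isCompact_compl [T2Space Z] {E : Type*} [TopologicalSpace E]
    {j : E → Z} (hj : IsOpenEmbedding j) {U V K : Set E} {x y : E} (hU : IsOpen U)
    (hV : IsCompact Vᶜ) (hUV : Disjoint U V) (hc : U ∪ V = Kᶜ) (hx : x ∈ U) (hy : y ∈ V) :
    Separates (j '' K) (j x) (j y) := by
  have hUK : Disjoint (j '' U) (j '' K) :=
    (disjoint_image_iff hj.injective).2 (subset_compl_iff_disjoint_right.1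
      (subset_union_left.trans hc.subset))
  have hVc : Vᶜ = U ∪ K := by
    rw [← compl_compl K, ← hc]
    ext z
    by_cases hzU : z ∈ U
    · simp [hzU, hUV.notMem_of_mem_left hzU]
    · simp [hzU]
  refine ⟨j '' U, (j '' Vᶜ)ᶜ, hj.isOpenMap U hU,
    (hV.image hj.continuous).isClosed.isOpen_compl, ?_, ?_, mem_image_of_mem j hx, ?_⟩
  · exact disjoint_compl_right.mono_right (compl_subset_compl.2
      (image_mono hUV.subset_compl_right))
  · rw [hVc, image_union, compl_union, union_inter_distrib_left, union_compl_self, univ_inter,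
      union_eq_right.2 hUK.subset_compl_right]
  · rw [mem_compl_iff, hj.injective.mem_set_image]
    exact not_not_intro hy

/-- A compact set separating two points of a chart separates them globally: of the two pieces of
its complement in the chart, one is bounded and stays closed off from the outside. -/
theorem Separates.image_of_isOpenEmbedding [T2Space Z] {E : Type*} [NormedAddCommGroup E]
    [NormedSpace ℝ E] [ProperSpace E] (hE : 1 < Module.rank ℝ E) {j : E → Z}
    (hj : IsOpenEmbedding j) {K : Set E} (hK : IsCompact K) {x y : E} (h : Separates K x y) :
    Separates (j '' K) (j x) (j y) := by
  obtain ⟨r, hr, hKr⟩ := hK.isBounded.subset_closedBall_lt 0 0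
  have hcompact : ∀ {V : Set E}, IsOpen V → (closedBall (0 : E) r)ᶜ ⊆ V → IsCompact Vᶜ :=
    fun hV hsub => (isCompact_closedBall 0 r).of_isClosed_subset hV.isClosed_compl
      (compl_subset_comm.1 hsub)
  obtain ⟨U, V, hU, hV, hUV, hc, hx, hy⟩ := h
  rcases (isPreconnected_compl_closedBall_zero hE hr.le).subset_or_subset hU hV hUV
    ((compl_subset_compl.2 hKr).trans hc.superset) with hsub | hsub
  · exact (separates_image_of_isCompact_compl hj hV (hcompact hU hsub) hUV.symm
      (by rw [union_comm, hc]) hy hx).symm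
  · exact separates_image_of_isCompact_compl hj hU (hcompact hV hsub) hUV hc hx hy

end Separation

/-! ### Doubling measures -/

section Doubling

variable {X : Type*} [MetricSpace X] [MeasurableSpace X] {μ : Measure X} {CD : ℝ≥0}

/-- The square root of the measure of a ball: the scale at which the metric `q_{μ,2}` sees the
ball `B(x,r)`. Real-valued, hence `0` for balls of infinite measure. -/
def volRadius (μ : Measure X) (x : X) (r : ℝ) : ℝ :=
  √(μ.real (Metric.ball x r))

theorem volRadius_nonneg (x : X) (r : ℝ) : 0 ≤ volRadius μ x r :=
  Real.sqrt_nonneg _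

theorem sq_volRadius (x : X) (r : ℝ) : volRadius μ x r ^ 2 = μ.real (Metric.ball x r) :=
  Real.sq_sqrt measureReal_nonneg

namespace IsDoublingWith

theorem measure_ball_ne_top (hd : IsDoublingWith μ CD) (x : X) (r : ℝ) :
    μ (Metric.ball x r) ≠ ⊤ := by
  rcases le_or_gt r 0 with hr | hr
  · simp [ball_eq_empty.2 hr]
  · exact (hd.1 x r hr).2.ne

theorem measure_ball_two_pow_mul_le (hd : IsDoublingWith μ CD) (x : X) {r : ℝ} (hr : 0 < r)
    (n : ℕ) : μ (Metric.ball x (2 ^ n * r)) ≤ CD ^ n * μ (Metric.ball x r) := by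
  induction n with
  | zero => simp
  | succ n ih =>
    rw [pow_succ', mul_assoc, pow_succ', mul_assoc]
    exact (hd.2 x _ (by positivity)).trans (by gcongr)

theorem measureReal_ball_two_pow_mul_le (hd : IsDoublingWith μ CD) (x : X) {r : ℝ}
    (hr : 0 < r) (n : ℕ) :
    μ.real (Metric.ball x (2 ^ n * r)) ≤ CD ^ n * μ.real (Metric.ball x r) := by
  have h := ENNReal.toReal_mono
    (mul_ne_top (pow_ne_top coe_ne_top) (hd.measure_ball_ne_top x r))
    (hd.measure_ball_two_pow_mul_le x hr n)
  rwa [toReal_mul, toReal_pow] at h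

theorem volRadius_mono (hd : IsDoublingWith μ CD) {x y : X} {r s : ℝ}
    (h : Metric.ball x r ⊆ Metric.ball y s) : volRadius μ x r ≤ volRadius μ y s :=
  Real.sqrt_le_sqrt (measureReal_mono h (hd.measure_ball_ne_top y s))

theorem volRadius_pos (hd : IsDoublingWith μ CD) (x : X) {r : ℝ} (hr : 0 < r) :
    0 < volRadius μ x r :=
  Real.sqrt_pos.2 (toReal_pos (hd.1 x r hr).1.ne' (hd.measure_ball_ne_top x r))

theorem volRadius_two_pow_mul_le (hd : IsDoublingWith μ CD) (x : X) {r : ℝ} (hr : 0 < r)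
    (n : ℕ) : volRadius μ x (2 ^ n * r) ≤ √CD ^ n * volRadius μ x r := by
  refine Real.sqrt_le_iff.2 ⟨by positivity [volRadius_nonneg (μ := μ) x r], ?_⟩
  rw [mul_pow, ← pow_mul', pow_mul, Real.sq_sqrt CD.coe_nonneg, sq_volRadius]
  exact hd.measureReal_ball_two_pow_mul_le x hr n

theorem volRadius_two_mul_le (hd : IsDoublingWith μ CD) (x : X) {r : ℝ} (hr : 0 < r) :
    volRadius μ x (2 * r) ≤ √CD * volRadius μ x r := by
  simpa using hd.volRadius_two_pow_mul_le x hr 1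

theorem one_le [Nonempty X] (hd : IsDoublingWith μ CD) : 1 ≤ CD := by
  obtain ⟨x⟩ : Nonempty X := inferInstance
  obtain ⟨hpos, hfin⟩ := hd.1 x 1 one_pos
  have h : 1 * μ (Metric.ball x 1) ≤ CD * μ (Metric.ball x 1) := by
    rw [one_mul]
    exact (measure_mono (ball_subset_ball (by norm_num))).trans (hd.2 x 1 one_pos)
  exact_mod_cast (ENNReal.mul_le_mul_iff_left hpos.ne' hfin.ne).1 h

theorem one_le_sqrt [Nonempty X] (hd : IsDoublingWith μ CD) : 1 ≤ √(CD : ℝ) :=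
  Real.one_le_sqrt.2 (by exact_mod_cast hd.one_le)

theorem ofReal_volRadius (hd : IsDoublingWith μ CD) (x : X) (r : ℝ) :
    ENNReal.ofReal (volRadius μ x r) = μ (Metric.ball x r) ^ (1 / 2 : ℝ) := by
  rw [volRadius, Real.sqrt_eq_rpow, ← ofReal_rpow_of_nonneg measureReal_nonneg (by norm_num),
    ofReal_measureReal (hd.measure_ball_ne_top x r)]

theorem sigmaFinite (hd : IsDoublingWith μ CD) : SigmaFinite μ := by
  rcases isEmpty_or_nonempty X with hX | ⟨⟨x⟩⟩
  · exact μ.eq_zero_of_isEmpty ▸ inferInstance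
  · exact ⟨⟨⟨fun n : ℕ => Metric.ball x n, fun _ => trivial,
      fun n => (hd.measure_ball_ne_top x n).lt_top, iUnion_ball_nat x⟩⟩⟩

theorem measure_singleton_le [PerfectSpace X] (hd : IsDoublingWith μ CD) (x : X) {r : ℝ}
    (hr : 0 < r) : μ {x} ≤ CD * μ (Metric.ball x r \ {x}) := by
  obtain ⟨a, hax, hne⟩ : (Metric.ball x (r / 2) ∩ {x}ᶜ).Nonempty :=
    (PerfectSpace.not_isolated x).nonempty_of_mem (inter_mem
      (mem_nhdsWithin_of_mem_nhds (ball_mem_nhds x (half_pos hr))) self_mem_nhdsWithin)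
  have hda : 0 < dist a x := dist_pos.2 hne
  calc μ {x} ≤ μ (Metric.ball a (2 * dist a x)) := measure_mono <| by
        rw [singleton_subset_iff, mem_ball, dist_comm]
        linarith
    _ ≤ CD * μ (Metric.ball a (dist a x)) := hd.2 a _ hda
    _ ≤ CD * μ (Metric.ball x r \ {x}) := by
        gcongr
        rw [mem_ball] at hax
        refine subset_sdiff_singleton (ball_subset_ball' (by linarith)) ?_
        rw [mem_ball, dist_comm]
        exact lt_irrefl _

theorem measure_singleton [PerfectSpace X] [OpensMeasurableSpace X] (hd : IsDoublingWith μ CD)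
    (x : X) : μ {x} = 0 := by
  have hlim : Tendsto (fun r => μ (Metric.ball x r \ {x})) (𝓝[>] 0) (𝓝 0) := by
    have h := tendsto_measure_biInter_gt (μ := μ) (s := fun r => Metric.ball x r \ {x})
      (a := (0 : ℝ))
      (fun r _ => (measurableSet_ball.diff isClosed_singleton.measurableSet).nullMeasurableSet)
      (fun _ _ _ hij => sdiff_subset_sdiff_left (ball_subset_ball hij))
      ⟨1, one_pos, measure_ne_top_of_subset sdiff_subset (hd.measure_ball_ne_top x 1)⟩
    have hinter : ⋂ r > (0 : ℝ), Metric.ball x r \ {x} = ∅ := by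
      rw [eq_empty_iff_forall_notMem]
      intro z hz
      rw [mem_iInter₂] at hz
      exact lt_irrefl _ (mem_ball.1 (hz _ (dist_pos.2 (hz 1 one_pos).2)).1)
    rwa [hinter, measure_empty] at h
  have hCD : Tendsto (fun r => CD * μ (Metric.ball x r \ {x})) (𝓝[>] 0) (𝓝 0) := by
    simpa using ENNReal.Tendsto.const_mul hlim (Or.inr coe_ne_top)
  exact le_bot_iff.1 (ge_of_tendsto hCD (eventually_mem_nhdsWithin.mono
    fun r hr => hd.measure_singleton_le x hr))

theorem tendsto_measure_ball_nhdsGT_zero [PerfectSpace X] [OpensMeasurableSpace X]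
    (hd : IsDoublingWith μ CD) (x : X) : Tendsto (fun r => μ (Metric.ball x r)) (𝓝[>] 0) (𝓝 0) := by
  have h := tendsto_measure_biInter_gt (μ := μ) (s := Metric.ball x) (a := 0)
    (fun r _ => measurableSet_ball.nullMeasurableSet) (fun _ _ _ => ball_subset_ball)
    ⟨1, one_pos, hd.measure_ball_ne_top x 1⟩
  rwa [biInter_gt_ball, closedBall_zero, hd.measure_singleton] at h

end IsDoublingWith

end Doubling

/-! ### The weak metric on chains -/

section Chains

variable {X : Type*} [MetricSpace X] {s δ δ' r : ℝ} {x y z : X}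

theorem pairBall_comm (x y : X) : pairBall x y = pairBall y x := by
  rw [pairBall, pairBall, dist_comm, union_comm]

theorem pairBall_subset_ball (h : dist x y ≤ r) : pairBall x y ⊆ Metric.ball x (2 * r) :=
  union_subset (ball_subset_ball (by linarith [dist_nonneg (x := x) (y := y)]))
    (ball_subset_ball' (by linarith [dist_comm x y]))

theorem IsDeltaChain.append {c c' : ℕ → X} {m m' : ℕ} (hc : IsDeltaChain δ x y c m)
    (hc' : IsDeltaChain δ y z c' m') :
    ∃ b : ℕ → X, IsDeltaChain δ x z b (m + m') ∧ (∀ i ≤ m, b i = c i) ∧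
      ∀ i, b (m + i) = c' i := by
  obtain ⟨hc0, hcm, hcδ⟩ := hc
  obtain ⟨hc'0, hc'm, hc'δ⟩ := hc'
  let b : ℕ → X := fun i => if i < m then c i else c' (i - m)
  have hleft : ∀ i ≤ m, b i = c i := fun i hi => by
    rcases hi.lt_or_eq with h | rfl <;> simp [b, *]
  have hright : ∀ i, b (m + i) = c' i := by simp [b]
  refine ⟨b, ⟨(hleft 0 m.zero_le).trans hc0, (hright m').trans hc'm, fun j hj => ?_⟩, hleft,
    hright⟩
  rcases lt_or_ge j m with h | h
  · rw [hleft j h.le, hleft (j + 1) h]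
    exact hcδ j h
  · obtain ⟨i, rfl⟩ := Nat.exists_eq_add_of_le h
    rw [hright, add_assoc, hright]
    exact hc'δ i (by lia)

variable [MeasurableSpace X] {μ : Measure X} {CD CW : ℝ≥0}

theorem qDelta_le_sum {m : ℕ} {c : ℕ → X} (hc : IsDeltaChain δ x y c m) :
    qDelta μ s δ x y ≤ ∑ j ∈ Finset.range m, μ (pairBall (c j) (c (j + 1))) ^ (1 / s) :=
  iInf_le_of_le m <| iInf_le_of_le c <| iInf_le _ hc

theorem qDelta_self : qDelta μ s δ x x = 0 :=
  nonpos_iff_eq_zero.1 <| (qDelta_le_sum (m := 0) (c := fun _ => x) ⟨rfl, rfl, by simp⟩).trans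
    (by simp)

theorem qDelta_le_of_dist_le (h : dist x y ≤ δ) :
    qDelta μ s δ x y ≤ μ (pairBall x y) ^ (1 / s) := by
  refine (qDelta_le_sum (m := 1) (c := fun i => if i = 0 then x else y)
    ⟨rfl, rfl, by simpa using h⟩).trans (by simp)

theorem qDelta_anti (h : δ ≤ δ') : qDelta μ s δ' x y ≤ qDelta μ s δ x y :=
  le_iInf fun _ => le_iInf fun _ => le_iInf fun hc =>
    qDelta_le_sum ⟨hc.1, hc.2.1, fun j hj => (hc.2.2 j hj).trans h⟩

theorem qDelta_triangle : qDelta μ s δ x z ≤ qDelta μ s δ x y + qDelta μ s δ y z := by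
  conv_rhs => rw [qDelta, qDelta]
  simp only [ENNReal.iInf_add, ENNReal.add_iInf]
  refine le_iInf fun m' => le_iInf fun c' => le_iInf fun hc' => le_iInf fun m => le_iInf fun c =>
    le_iInf fun hc => ?_
  obtain ⟨b, hb, hleft, hright⟩ := hc.append hc'
  refine (qDelta_le_sum hb).trans_eq ?_
  rw [Finset.sum_range_add]
  refine congrArg₂ _ (Finset.sum_congr rfl fun j hj => ?_) (Finset.sum_congr rfl fun j _ => ?_)
  · rw [hleft j (Finset.mem_range.1 hj).le, hleft (j + 1) (Finset.mem_range.1 hj)]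
  · rw [hright, add_assoc, hright]

theorem qmu_le {c : ℝ≥0∞} (h : ∀ δ > 0, qDelta μ s δ x y ≤ c) : qmu μ s x y ≤ c :=
  limsup_le_of_le (by isBoundedDefault) (eventually_mem_nhdsWithin.mono h)

namespace IsDoublingWith

theorem measure_pairBall_rpow_le (hd : IsDoublingWith μ CD) (h : dist x y ≤ r) :
    μ (pairBall x y) ^ (1 / 2 : ℝ) ≤ ENNReal.ofReal (volRadius μ x (2 * r)) := by
  rw [hd.ofReal_volRadius]
  exact rpow_le_rpow (measure_mono (pairBall_subset_ball h)) (by norm_num)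

theorem ofReal_volRadius_dist_le (hd : IsDoublingWith μ CD) (x y : X) :
    ENNReal.ofReal (volRadius μ x (dist x y)) ≤ μ (pairBall x y) ^ (1 / 2 : ℝ) := by
  rw [hd.ofReal_volRadius]
  exact rpow_le_rpow (measure_mono subset_union_left) (by norm_num)

theorem qDelta_le_ofReal_volRadius (hd : IsDoublingWith μ CD) (h : dist x y ≤ δ) :
    qDelta μ 2 δ x y ≤ ENNReal.ofReal (volRadius μ x (2 * δ)) :=
  (qDelta_le_of_dist_le h).trans (hd.measure_pairBall_rpow_le h)

theorem eventually_measure_pairBall_rpow_le [PerfectSpace X] [OpensMeasurableSpace X]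
    (hd : IsDoublingWith μ CD) (hs : 0 < s) (x : X) {ε : ℝ≥0∞} (hε : 0 < ε) :
    ∀ᶠ y in 𝓝 x, μ (pairBall x y) ^ (1 / s) ≤ ε := by
  have hlim : Tendsto (fun r => μ (Metric.ball x r) ^ (1 / s)) (𝓝[>] 0) (𝓝 0) := by
    have h := (hd.tendsto_measure_ball_nhdsGT_zero x).ennrpow_const (1 / s)
    rwa [zero_rpow_of_pos (one_div_pos.2 hs)] at h
  obtain ⟨r, hr, hr0⟩ := ((hlim.eventually_le_const hε).and eventually_mem_nhdsWithin).exists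
  filter_upwards [ball_mem_nhds x (half_pos hr0)] with y hy
  refine (rpow_le_rpow (measure_mono ?_) (one_div_pos.2 hs).le).trans hr
  have hsub := pairBall_subset_ball (mem_ball'.1 hy).le
  rwa [mul_div_cancel₀ _ two_ne_zero] at hsub

theorem eventually_qDelta_le_add [PerfectSpace X] [OpensMeasurableSpace X]
    (hd : IsDoublingWith μ CD) (hs : 0 < s) (hδ : 0 < δ) (x y : X) {ε : ℝ≥0∞} (hε : 0 < ε) :
    ∀ᶠ p in 𝓝 (x, y), qDelta μ s δ x y ≤ qDelta μ s δ p.1 p.2 + ε := by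
  have hclose : ∀ x : X, ∀ᶠ x' in 𝓝 x, μ (pairBall x x') ^ (1 / s) ≤ ε / 2 ∧ dist x x' ≤ δ :=
    fun x => (hd.eventually_measure_pairBall_rpow_le hs x (ENNReal.half_pos hε.ne')).and <| by
      filter_upwards [ball_mem_nhds x hδ] with x' hx' using (mem_ball'.1 hx').le
  filter_upwards [(hclose x).prod_nhds (hclose y)] with ⟨x', y'⟩ ⟨⟨hxε, hxδ⟩, hyε, hyδ⟩
  calc qDelta μ s δ x y
      ≤ qDelta μ s δ x x' + (qDelta μ s δ x' y' + qDelta μ s δ y' y) :=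
        qDelta_triangle.trans (add_le_add_right qDelta_triangle _)
    _ ≤ ε / 2 + (qDelta μ s δ x' y' + ε / 2) := by
        gcongr
        · exact (qDelta_le_of_dist_le hxδ).trans hxε
        · rw [pairBall_comm] at hyε
          exact (qDelta_le_of_dist_le (by rwa [dist_comm])).trans hyε
    _ = qDelta μ s δ x' y' + ε := by
        rw [add_left_comm, ENNReal.add_halves]

theorem lowerSemicontinuous_qDelta [PerfectSpace X] [OpensMeasurableSpace X]
    (hd : IsDoublingWith μ CD) (hs : 0 < s) (hδ : 0 < δ) :
    LowerSemicontinuous fun p : X × X => qDelta μ s δ p.1 p.2 := by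
  rintro ⟨x, y⟩ c hc
  obtain ⟨ε, hε, hcε⟩ := ENNReal.lt_iff_exists_add_pos_lt.1 hc
  filter_upwards [hd.eventually_qDelta_le_add hs hδ x y (ENNReal.coe_pos.2 hε)] with p hp
  exact lt_of_add_lt_add_right (hcε.trans_le hp)

theorem eventually_volRadius_dist_le (hd : IsDoublingWith μ CD) (hxy : x ≠ y) :
    ∀ᶠ p in 𝓝 (x, y), volRadius μ p.1 (dist p.1 p.2) ≤ √CD * volRadius μ x (dist x y) := by
  have hr : 0 < dist x y := dist_pos.2 hxy
  have hlim : Tendsto (fun p : X × X => dist p.1 p.2 + dist p.1 x) (𝓝 (x, y))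
      (𝓝 (dist x y + dist x x)) :=
    (continuous_dist.add (continuous_fst.dist continuous_const)).tendsto _
  have hlt : dist x y + dist x x < 2 * dist x y := by
    rw [dist_self]
    linarith
  filter_upwards [hlim.eventually_le_const hlt] with p hp
  exact (hd.volRadius_mono (ball_subset_ball' hp)).trans (hd.volRadius_two_mul_le x hr)

end IsDoublingWith

namespace IsWMDM

theorem ofReal_volRadius_dist_le (hw : IsWMDM μ 2 CW) (hd : IsDoublingWith μ CD) (x y : X) :
    ENNReal.ofReal (volRadius μ x (dist x y)) ≤ CW * qmu μ 2 x y :=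
  (hd.ofReal_volRadius_dist_le x y).trans (hw x y)

theorem exists_eventually_ofReal_volRadius_le_qDelta [PerfectSpace X] [OpensMeasurableSpace X]
    (hw : IsWMDM μ 2 CW) (hd : IsDoublingWith μ CD) (hxy : x ≠ y) :
    ∃ δ > 0, ∀ᶠ p in 𝓝 (x, y), ENNReal.ofReal (volRadius μ p.1 (dist p.1 p.2)) ≤
      ENNReal.ofReal (2 * CW * √CD) * qDelta μ 2 δ p.1 p.2 := by
  set V := ENNReal.ofReal (volRadius μ x (dist x y)) with hVdef
  have hV0 : V ≠ 0 := (ofReal_pos.2 (hd.volRadius_pos x (dist_pos.2 hxy))).ne'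
  have hV : V ≤ CW * qmu μ 2 x y := hw.ofReal_volRadius_dist_le hd x y
  have hCW : (CW : ℝ≥0∞) ≠ 0 := by
    rintro h
    simp [h, hV0] at hV
  have hlt : V / CW / 2 < qmu μ 2 x y :=
    (ENNReal.half_lt_self (ENNReal.div_ne_zero.2 ⟨hV0, coe_ne_top⟩)
      (ENNReal.div_ne_top ofReal_ne_top hCW)).trans_le (ENNReal.div_le_of_le_mul' hV)
  obtain ⟨δ, hδ, hδlt⟩ : ∃ δ > 0, V / CW / 2 < qDelta μ 2 δ x y := by
    by_contra! h
    exact hlt.not_ge (qmu_le h)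
  refine ⟨δ, hδ, ?_⟩
  filter_upwards [hd.lowerSemicontinuous_qDelta two_pos hδ (x, y) _ hδlt,
    hd.eventually_volRadius_dist_le hxy] with p hpq hpv
  calc ENNReal.ofReal (volRadius μ p.1 (dist p.1 p.2))
      ≤ ENNReal.ofReal (√CD * volRadius μ x (dist x y)) := ofReal_le_ofReal hpv
    _ = ENNReal.ofReal (2 * CW * √CD) * (V / CW / 2) := by
        rw [ofReal_mul (by positivity), ofReal_mul (by positivity), ofReal_mul two_pos.le,
          ofReal_coe_nnreal, ofReal_ofNat, ← hVdef, mul_comm _ (ENNReal.ofReal √CD), mul_assoc,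
          mul_comm 2, mul_assoc, ENNReal.mul_div_cancel two_ne_zero ofNat_ne_top,
          ENNReal.mul_div_cancel hCW coe_ne_top]
    _ ≤ _ := mul_le_mul_right hpq.le _

theorem exists_ofReal_volRadius_le_qDelta [PerfectSpace X] [OpensMeasurableSpace X]
    (hw : IsWMDM μ 2 CW) (hd : IsDoublingWith μ CD) {K : Set X} (hK : IsCompact K) {σ : ℝ}
    (hσ : 0 < σ) :
    ∃ δ₀ > 0, ∀ δ ≤ δ₀, ∀ x ∈ K, ∀ y ∈ K, σ ≤ dist x y →
      ENNReal.ofReal (volRadius μ x (dist x y)) ≤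
        ENNReal.ofReal (2 * CW * √CD) * qDelta μ 2 δ x y := by
  have hcpt : IsCompact ((K ×ˢ K) ∩ {p : X × X | σ ≤ dist p.1 p.2}) :=
    (hK.prod hK).inter_right (isClosed_le continuous_const continuous_dist)
  obtain ⟨δ₀, hδ₀, h⟩ : ∃ δ₀ > 0, ∀ p ∈ (K ×ˢ K) ∩ {p : X × X | σ ≤ dist p.1 p.2},
      ENNReal.ofReal (volRadius μ p.1 (dist p.1 p.2)) ≤
        ENNReal.ofReal (2 * CW * √CD) * qDelta μ 2 δ₀ p.1 p.2 := by
    refine hcpt.induction_on (p := fun t => ∃ δ₀ > 0, ∀ p ∈ t,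
      ENNReal.ofReal (volRadius μ p.1 (dist p.1 p.2)) ≤
        ENNReal.ofReal (2 * CW * √CD) * qDelta μ 2 δ₀ p.1 p.2) ⟨1, one_pos, by simp⟩ ?_ ?_ ?_
    · rintro t t' htt' ⟨δ, hδ, h⟩
      exact ⟨δ, hδ, fun p hp => h p (htt' hp)⟩
    · rintro t t' ⟨δ, hδ, h⟩ ⟨δ', hδ', h'⟩
      refine ⟨min δ δ', lt_min hδ hδ', fun p hp => ?_⟩
      rcases hp with hp | hp
      · exact (h p hp).trans (mul_le_mul_right (qDelta_anti (min_le_left δ δ')) _)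
      · exact (h' p hp).trans (mul_le_mul_right (qDelta_anti (min_le_right δ δ')) _)
    · rintro ⟨x, y⟩ ⟨-, hxy⟩
      obtain ⟨δ, hδ, h⟩ := hw.exists_eventually_ofReal_volRadius_le_qDelta hd
        (dist_pos.1 (hσ.trans_le hxy))
      exact ⟨_, mem_nhdsWithin_of_mem_nhds h, δ, hδ, fun p hp => hp⟩
  exact ⟨δ₀, hδ₀, fun δ hδ x hx y hy hxy =>
    (h (x, y) ⟨⟨hx, hy⟩, hxy⟩).trans (mul_le_mul_right (qDelta_anti hδ) _)⟩

end IsWMDM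

end Chains

/-! ### Nets, packings and discrete sums -/

section DiscreteSums

theorem exists_finset_net {X : Type*} [PseudoMetricSpace X] {K : Set X} (hK : IsCompact K) {ε : ℝ}
    (hε : 0 < ε) :
    ∃ N : Finset X, ↑N ⊆ K ∧ (N : Set X).Pairwise (fun p p' => ε < dist p p') ∧
      ∀ z ∈ K, ∃ p ∈ N, dist z p ≤ ε := by
  lift ε to ℝ≥0 using hε.le
  have hε0 : ε / 2 ≠ 0 := (half_pos (NNReal.coe_pos.1 hε)).ne'
  have htop : packingNumber ε K ≠ ⊤ := by
    obtain ⟨N, -, hN, hcov⟩ := exists_finite_isCover_of_isCompact hε0 hK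
    have h := packingNumber_two_mul_le_externalCoveringNumber (ε / 2) K
    rw [mul_div_cancel₀ _ two_ne_zero] at h
    exact ((h.trans hcov.externalCoveringNumber_le_encard).trans_lt (encard_lt_top_iff.2 hN)).ne
  have hfin : (maximalSeparatedSet ε K).Finite := by
    rw [← encard_lt_top_iff, encard_maximalSeparatedSet htop]
    exact htop.lt_top
  refine ⟨hfin.toFinset, ?_, fun p hp p' hp' hne => ?_, fun z hz => ?_⟩
  · rw [hfin.coe_toFinset]
    exact maximalSeparatedSet_subset
  · rw [hfin.coe_toFinset] at hp hp'
    have h : (ε : ℝ≥0∞) < edist p p' := isSeparated_maximalSeparatedSet hp hp' hne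
    rw [edist_nndist] at h
    exact_mod_cast h
  · obtain ⟨p, hp, hzp⟩ := mem_iUnion₂.1
      (isCover_iff_subset_iUnion_closedBall.1 (isCover_maximalSeparatedSet htop) hz)
    exact ⟨p, hfin.mem_toFinset.2 hp, hzp⟩

variable {ι : Type*}

/-- The discrete form of `∫ dG / √G = 2√G`; removing a term of largest `d` telescopes the bound. -/
theorem sum_div_sqrt_le (N : Finset ι) {m G d : ι → ℝ} (hm : ∀ p ∈ N, 0 ≤ m p)
    (hmG : ∀ p ∈ N, ∑ p' ∈ N with d p' ≤ d p, m p' ≤ G p) :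
    ∑ p ∈ N, m p / √(G p) ≤ 2 * √(∑ p ∈ N, m p) := by
  classical
  induction N using Finset.induction_on_max_value d with
  | empty => simp
  | insert a s ha hmax ih =>
    have ih' := ih (fun p hp => hm p (Finset.mem_insert_of_mem hp)) fun p hp =>
      (Finset.sum_le_sum_of_subset_of_nonneg
        (Finset.filter_subset_filter _ (Finset.subset_insert a s))
        fun i hi _ => hm i (Finset.mem_filter.1 hi).1).trans (hmG p (Finset.mem_insert_of_mem hp))
    have hall : ∀ p ∈ insert a s, d p ≤ d a := fun p hp => by
      rcases Finset.mem_insert.1 hp with rfl | hp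
      exacts [le_rfl, hmax p hp]
    have hGa := hmG a (Finset.mem_insert_self _ _)
    rw [Finset.filter_true_of_mem hall, Finset.sum_insert ha] at hGa
    rw [Finset.sum_insert ha, Finset.sum_insert ha]
    have hma : 0 ≤ m a := hm a (Finset.mem_insert_self _ _)
    have hS : 0 ≤ ∑ p ∈ s, m p := Finset.sum_nonneg fun p hp => hm p (Finset.mem_insert_of_mem hp)
    rcases hma.eq_or_lt with h0 | h0
    · simpa [← h0] using ih'
    set u := √(∑ p ∈ s, m p)
    set v := √(m a + ∑ p ∈ s, m p)
    have hv : 0 < v := Real.sqrt_pos.2 (by linarith)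
    have huv : m a = v ^ 2 - u ^ 2 := by
      rw [Real.sq_sqrt (by linarith), Real.sq_sqrt hS, add_sub_cancel_right]
    have hterm : m a / √(G a) ≤ 2 * v - 2 * u :=
      calc m a / √(G a) ≤ m a / v := div_le_div_of_nonneg_left hma hv (Real.sqrt_le_sqrt hGa)
        _ ≤ 2 * v - 2 * u := by
            rw [div_le_iff₀ hv, huv]
            nlinarith [sq_nonneg (v - u)]
    linarith

theorem le_sum_mul_of_one_le_sum_filter (F : Finset ι) {c a w : ι → ℝ} (hc : ∀ p ∈ F, 0 ≤ c p)
    (hw : ∀ p ∈ F, 0 ≤ w p) {T : ℝ}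
    (h : ∀ t ∈ Ioo 0 T, 1 ≤ ∑ p ∈ F with a p < t ∧ t ≤ a p + w p, c p) :
    T ≤ ∑ p ∈ F, c p * w p := by
  have hcount : ∀ t ∈ Ioo 0 T, (1 : ℝ≥0∞) ≤
      ∑ p ∈ F, (Ioc (a p) (a p + w p)).indicator (fun _ => ENNReal.ofReal (c p)) t := by
    intro t ht
    have h1 := ofReal_le_ofReal (h t ht)
    rw [ofReal_one, ofReal_sum_of_nonneg fun p hp => hc p (Finset.mem_filter.1 hp).1,
      Finset.sum_filter] at h1
    simpa only [indicator_apply, mem_Ioc] using h1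
  have hcw : ∀ p ∈ F, 0 ≤ c p * w p := fun p hp => mul_nonneg (hc p hp) (hw p hp)
  refine (ofReal_le_ofReal_iff (Finset.sum_nonneg hcw)).1 ?_
  calc ENNReal.ofReal T = ∫⁻ _ in Ioo 0 T, 1 := by simp
    _ ≤ ∫⁻ t, ∑ p ∈ F, (Ioc (a p) (a p + w p)).indicator (fun _ => ENNReal.ofReal (c p)) t :=
        (setLIntegral_mono' measurableSet_Ioo hcount).trans (setLIntegral_le_lintegral _ _)
    _ = ∑ p ∈ F, ENNReal.ofReal (c p * w p) := by
        rw [lintegral_finsetSum _ fun p _ => measurable_const.indicator measurableSet_Ioc]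
        refine Finset.sum_congr rfl fun p hp => ?_
        simp [lintegral_indicator measurableSet_Ioc, ofReal_mul (hc p hp)]
    _ = ENNReal.ofReal (∑ p ∈ F, c p * w p) := (ofReal_sum_of_nonneg hcw).symm

end DiscreteSums

namespace IsDoublingWith

variable {X : Type*} [MetricSpace X] [MeasurableSpace X] [OpensMeasurableSpace X] {μ : Measure X}
  {CD : ℝ≥0} {F : Finset X} {r ρ : ℝ}

theorem sum_measureReal_ball_le (hd : IsDoublingWith μ CD)
    (hF : (F : Set X).Pairwise fun p p' => 2 * r ≤ dist p p') {o : X}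
    (ho : ∀ p ∈ F, dist p o + r ≤ ρ) :
    ∑ p ∈ F, μ.real (Metric.ball p r) ≤ μ.real (Metric.ball o ρ) := by
  rw [← measureReal_biUnion_finset (fun p hp p' hp' hne => ball_disjoint_ball (by
    linarith [hF hp hp' hne])) (fun _ _ => measurableSet_ball)
    fun p _ => hd.measure_ball_ne_top p r]
  refine measureReal_mono (iUnion₂_subset fun p hp => ball_subset_ball' ?_)
    (hd.measure_ball_ne_top o ρ)
  linarith [ho p hp]

theorem sum_measureReal_div_volRadius_le (hd : IsDoublingWith μ CD) (hr : 0 < r)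
    (hF : (F : Set X).Pairwise fun p p' => 2 * r ≤ dist p p') {o x : X}
    (ho : ∀ p ∈ F, r ≤ dist o p) (hx : ∀ p ∈ F, dist p x + r ≤ ρ) :
    ∑ p ∈ F, μ.real (Metric.ball p r) / volRadius μ o (dist o p) ≤ 2 * √CD * volRadius μ x ρ := by
  have : Nonempty X := ⟨x⟩
  have hCD : 0 < √(CD : ℝ) := one_pos.trans_le hd.one_le_sqrt
  have hnear : ∀ p ∈ F, ∑ p' ∈ F with dist o p' ≤ dist o p, μ.real (Metric.ball p' r) ≤
      CD * μ.real (Metric.ball o (dist o p)) := fun p hp => by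
    have hpos : 0 < dist o p := hr.trans_le (ho p hp)
    refine (hd.sum_measureReal_ball_le (o := o) (ρ := 2 * dist o p)
      (hF.mono (Finset.coe_subset.2 (Finset.filter_subset _ F))) fun p' hp' => ?_).trans ?_
    · rw [dist_comm]
      linarith [(Finset.mem_filter.1 hp').2, ho p hp]
    · simpa using hd.measureReal_ball_two_pow_mul_le o hpos 1
  have hterm : ∀ p, μ.real (Metric.ball p r) / volRadius μ o (dist o p) =
      √CD * (μ.real (Metric.ball p r) / √(CD * μ.real (Metric.ball o (dist o p)))) := fun p => by
    rw [Real.sqrt_mul CD.coe_nonneg, mul_div_assoc', mul_div_mul_left _ _ hCD.ne', volRadius]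
  calc ∑ p ∈ F, μ.real (Metric.ball p r) / volRadius μ o (dist o p)
      = √CD * ∑ p ∈ F, μ.real (Metric.ball p r) / √(CD * μ.real (Metric.ball o (dist o p))) := by
        rw [Finset.mul_sum]
        exact Finset.sum_congr rfl fun p _ => hterm p
    _ ≤ √CD * (2 * √(∑ p ∈ F, μ.real (Metric.ball p r))) := by
        gcongr
        exact sum_div_sqrt_le F (fun _ _ => measureReal_nonneg) hnear
    _ ≤ √CD * (2 * volRadius μ x ρ) := by
        gcongr
        exact Real.sqrt_le_sqrt (hd.sum_measureReal_ball_le hF hx)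
    _ = 2 * √CD * volRadius μ x ρ := by ring

end IsDoublingWith

/-! ### Proximity graphs -/

section ProximityGraph

variable {X : Type*} [MetricSpace X] {J : Finset X} {ρ : ℝ} {a b : X}

/-- The graph on `X` joining distinct points of the finite set `J` at distance at most `ρ`; its
walks inside `J` are `ρ`-chains. -/
def proximityGraph (J : Finset X) (ρ : ℝ) : SimpleGraph X where
  Adj p p' := p ≠ p' ∧ p ∈ J ∧ p' ∈ J ∧ dist p p' ≤ ρ
  symm := ⟨fun p p' h => ⟨h.1.symm, h.2.2.1, h.2.1, by rw [dist_comm]; exact h.2.2.2⟩⟩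
  loopless := ⟨fun _ h => h.1 rfl⟩

theorem proximityGraph_reachable_of_dist_le (ha : a ∈ J) (hb : b ∈ J) (h : dist a b ≤ ρ) :
    (proximityGraph J ρ).Reachable a b := by
  rcases eq_or_ne a b with rfl | hab
  · rfl
  · exact SimpleGraph.Adj.reachable ⟨hab, ha, hb, h⟩

theorem mem_of_mem_support_proximityGraph (W : (proximityGraph J ρ).Walk a b) (ha : a ∈ J) {p : X}
    (hp : p ∈ W.support) : p ∈ J := by
  induction W with
  | nil => simpa [List.mem_singleton.1 hp] using ha
  | cons h W ih =>
    rcases List.mem_cons.1 hp with rfl | hp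
    exacts [ha, ih h.2.2.1 hp]

variable [MeasurableSpace X] {μ : Measure X} {CD : ℝ≥0}

theorem IsDoublingWith.qDelta_le_sum_support (hd : IsDoublingWith μ CD)
    (W : (proximityGraph J ρ).Walk a b) :
    qDelta μ 2 ρ a b ≤
      (W.support.map fun p => ENNReal.ofReal (volRadius μ p (2 * ρ))).sum := by
  induction W with
  | nil => simp [qDelta_self]
  | cons h W ih =>
    rw [SimpleGraph.Walk.support_cons, List.map_cons, List.sum_cons]
    exact qDelta_triangle.trans (add_le_add (hd.qDelta_le_ofReal_volRadius h.2.2.2) ih)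

theorem IsDoublingWith.qDelta_le_of_reachable (hd : IsDoublingWith μ CD) (ha : a ∈ J)
    (h : (proximityGraph J ρ).Reachable a b) :
    qDelta μ 2 ρ a b ≤ ENNReal.ofReal (∑ p ∈ J, volRadius μ p (2 * ρ)) := by
  classical
  obtain ⟨W, hW⟩ := h.exists_isPath
  calc qDelta μ 2 ρ a b
      ≤ ∑ p ∈ W.support.toFinset, ENNReal.ofReal (volRadius μ p (2 * ρ)) := by
        rw [List.sum_toFinset _ hW.support_nodup]
        exact hd.qDelta_le_sum_support W
    _ ≤ ∑ p ∈ J, ENNReal.ofReal (volRadius μ p (2 * ρ)) :=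
        Finset.sum_le_sum_of_subset fun p hp =>
          mem_of_mem_support_proximityGraph W ha (List.mem_toFinset.1 hp)
    _ = _ := (ofReal_sum_of_nonneg fun _ _ => volRadius_nonneg _ _).symm

end ProximityGraph

/-! ### Separation by finite unions of balls -/

section BallUnions

theorem Separates.preimage {Y Z : Type*} [TopologicalSpace Y] [TopologicalSpace Z] {j : Y → Z}
    (hj : Continuous j) {K : Set Z} {x y : Y} (h : Separates K (j x) (j y)) :
    Separates (j ⁻¹' K) x y := by
  obtain ⟨U, V, hU, hV, hUV, hc, hx, hy⟩ := h
  exact ⟨j ⁻¹' U, j ⁻¹' V, hU.preimage hj, hV.preimage hj, hUV.preimage j,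
    by rw [← preimage_union, hc, preimage_compl], hx, hy⟩

theorem Separates.exists_subset_forall_component {Z ι : Type*} [TopologicalSpace Z]
    [NormalSpace Z] [SimplyConnectedSpace Z] [LocallyPathConnectedSpace Z] [DecidableEq ι]
    {K₀ : Set Z} {A : ι → Set Z} {S : Finset ι} {x y : Z} (hK₀ : IsClosed K₀)
    (hA : ∀ i, IsClosed (A i)) (h : Separates (K₀ ∪ ⋃ i ∈ S, A i) x y) :
    ∃ J ⊆ S, Separates (K₀ ∪ ⋃ i ∈ J, A i) x y ∧ ∀ C ⊆ J, C.Nonempty →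
      Disjoint (⋃ i ∈ C, A i) (K₀ ∪ ⋃ i ∈ J \ C, A i) →
      C = J ∧ Separates (⋃ i ∈ C, A i) x y := by
  have hcl : ∀ F : Finset ι, IsClosed (⋃ i ∈ F, A i) := fun F =>
    F.finite_toSet.isClosed_biUnion fun i _ => hA i
  obtain ⟨J, hJS, hJ, hmin⟩ := exists_minimal_le_of_wellFoundedLT
    (fun J : Finset ι => Separates (K₀ ∪ ⋃ i ∈ J, A i) x y) S h
  refine ⟨J, hJS, hJ, fun C hCJ ⟨a, ha⟩ hdisj => ?_⟩
  have hunion : (⋃ i ∈ C, A i) ∪ (K₀ ∪ ⋃ i ∈ J \ C, A i) = K₀ ∪ ⋃ i ∈ J, A i := by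
    rw [union_left_comm, ← Finset.set_biUnion_union, Finset.union_sdiff_of_subset hCJ]
  rcases Separates.of_union (hcl C) (hK₀.union (hcl _)) hdisj (hunion ▸ hJ) with hC | hrest
  · have hsub : K₀ ∪ ⋃ i ∈ C, A i ⊆ K₀ ∪ ⋃ i ∈ J, A i :=
      union_subset_union_right _ (biUnion_subset_biUnion_left hCJ)
    exact ⟨hCJ.antisymm (hmin (hC.mono subset_union_right (hK₀.union (hcl C))
      (notMem_subset hsub hJ.left_notMem) (notMem_subset hsub hJ.right_notMem)) hCJ), hC⟩
  · exact absurd ha (Finset.mem_sdiff.1 (hmin hrest Finset.sdiff_subset (hCJ ha))).2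

variable {X : Type*} [MetricSpace X] {B : Set X} {N S : Finset X} {x y : X} {δ : ℝ}

theorem isClosed_biUnion_closedBall (F : Finset X) (δ : ℝ) :
    IsClosed (⋃ p ∈ F, closedBall p δ) :=
  F.finite_toSet.isClosed_biUnion fun _ _ => isClosed_closedBall

theorem separates_of_finite_net (hB : IsOpen B) (hxB : x ∈ B) (hyB : y ∈ B)
    (hN : ∀ z ∈ B, ∃ p ∈ N, dist z p ≤ δ) {P : X → Prop}
    (hS : ∀ p ∈ N, ∀ p' ∈ N, dist p p' ≤ 2 * δ → P p → ¬P p' → p ∈ S)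
    (hSx : ∀ p ∈ S, δ < dist x p) (hSy : ∀ p ∈ S, δ < dist y p)
    (hPx : ∀ p ∈ N, dist x p ≤ δ → P p) (hPy : ∀ p ∈ N, dist y p ≤ δ → ¬P p) :
    Separates (Bᶜ ∪ ⋃ p ∈ S, closedBall p δ) x y := by
  classical
  set KS := ⋃ p ∈ S, closedBall p δ
  set U := ⋃ p ∈ N.filter P, closedBall p δ
  set V := ⋃ p ∈ N.filter (¬P ·), closedBall p δ
  have mem_KS : ∀ z, z ∈ KS ↔ ∃ p ∈ S, dist z p ≤ δ := by simp [KS]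
  have mem_U : ∀ z, z ∈ U ↔ ∃ p, (p ∈ N ∧ P p) ∧ dist z p ≤ δ := by simp [U]
  have mem_V : ∀ z, z ∈ V ↔ ∃ p, (p ∈ N ∧ ¬P p) ∧ dist z p ≤ δ := by simp [V]
  have hcover : ∀ z ∈ B, z ∈ U ∨ z ∈ V := fun z hz => by
    obtain ⟨p, hp, hzp⟩ := hN z hz
    simp only [mem_U, mem_V]
    by_cases h : P p
    exacts [Or.inl ⟨p, ⟨hp, h⟩, hzp⟩, Or.inr ⟨p, ⟨hp, h⟩, hzp⟩]
  have hboth : ∀ z ∈ U, z ∈ V → z ∈ KS := fun z hU hV => by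
    simp only [mem_U, mem_V, mem_KS] at hU hV ⊢
    obtain ⟨p, ⟨hp, hPp⟩, hzp⟩ := hU
    obtain ⟨p', ⟨hp', hPp'⟩, hzp'⟩ := hV
    exact ⟨p, hS p hp p' hp' (by linarith [dist_triangle_left p p' z]) hPp hPp', hzp⟩
  have hopen : ∀ F : Finset X, IsOpen (B ∩ (KS ∪ ⋃ p ∈ F, closedBall p δ)ᶜ) := fun F =>
    hB.inter ((isClosed_biUnion_closedBall S δ).union
      (isClosed_biUnion_closedBall F δ)).isOpen_compl
  refine ⟨B ∩ (KS ∪ V)ᶜ, B ∩ (KS ∪ U)ᶜ, hopen _, hopen _, ?_, ?_, ⟨hxB, ?_⟩, hyB, ?_⟩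
  · rw [Set.disjoint_left]
    rintro z ⟨hz, hzV⟩ ⟨-, hzU⟩
    rcases hcover z hz with h | h
    exacts [hzU (Or.inr h), hzV (Or.inr h)]
  · ext z
    have hc := hcover z
    have hb := hboth z
    simp only [mem_union, mem_inter_iff, mem_compl_iff]
    tauto
  · simp only [mem_compl_iff, mem_union, mem_KS, mem_V]
    rintro (⟨p, hp, hxp⟩ | ⟨p, ⟨hp, hPp⟩, hxp⟩)
    exacts [(hSx p hp).not_ge hxp, hPp (hPx p hp hxp)]
  · simp only [mem_compl_iff, mem_union, mem_KS, mem_U]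
    rintro (⟨p, hp, hyp⟩ | ⟨p, ⟨hp, hPp⟩, hyp⟩)
    exacts [(hSy p hp).not_ge hyp, hPy p hp hyp hPp]

theorem disjoint_biUnion_closedBall_component {J : Finset X} {a : X} {R : ℝ} [DecidableEq X]
    [DecidablePred ((proximityGraph J (2 * δ)).Reachable a)]
    (hfar : ∀ b ∈ J, (proximityGraph J (2 * δ)).Reachable a b → dist b x + δ < R) :
    Disjoint (⋃ p ∈ J.filter ((proximityGraph J (2 * δ)).Reachable a), closedBall p δ)
      ((Metric.ball x R)ᶜ ∪
        ⋃ p ∈ J \ J.filter ((proximityGraph J (2 * δ)).Reachable a), closedBall p δ) := by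
  rw [Set.disjoint_left]
  intro u hu
  simp only [mem_iUnion, Finset.mem_filter, mem_closedBall, exists_prop] at hu
  obtain ⟨p, ⟨hpJ, hap⟩, hup⟩ := hu
  simp only [mem_union, mem_compl_iff, mem_ball, not_lt, mem_iUnion, Finset.mem_sdiff,
    Finset.mem_filter, mem_closedBall, exists_prop]
  rintro (hu | ⟨p', ⟨hp'J, hp'⟩, hup'⟩)
  · linarith [hfar p hpJ hap, dist_triangle u p x]
  · exact hp' ⟨hp'J, hap.trans (proximityGraph_reachable_of_dist_le hpJ hp'J
      (by linarith [dist_triangle_left p p' u]))⟩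

variable {E : Type*} [NormedAddCommGroup E] [NormedSpace ℝ E] [ProperSpace E]

theorem Separates.exists_chain_or_separates (hE : 1 < Module.rank ℝ E) {j : E → X}
    (hj : IsOpenEmbedding j) {R τ : ℝ} (hτ : τ ≤ R) (hδR : δ ≤ R)
    (hcpt : IsCompact (closedBall x (2 * R))) (hrange : closedBall x (2 * R) ⊆ range j)
    {L : Set X} (hL : IsPreconnected L) (hLτ : L ⊆ Metric.ball x τ) (hxL : x ∈ L) (hyL : y ∈ L)
    (hSR : ∀ p ∈ S, dist p x ≤ R)
    (h : Separates ((Metric.ball x R)ᶜ ∪ ⋃ p ∈ S, closedBall p δ) x y) :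
    ∃ J ⊆ S, ∃ a ∈ J, dist a x < τ + δ ∧
      ((∃ b ∈ J, (proximityGraph J (2 * δ)).Reachable a b ∧ R ≤ dist b x + δ) ∨
        ((∀ b ∈ J, (proximityGraph J (2 * δ)).Reachable a b) ∧
          Separates (⋃ p ∈ J, closedBall p δ) x y)) := by
  classical
  have hLR : L ⊆ Metric.ball x R := hLτ.trans (ball_subset_ball hτ)
  have hR : 0 < R := dist_nonneg.trans_lt (hLR hxL)
  have hLj : L ⊆ range j := (hLR.trans ball_subset_closedBall).trans
    ((closedBall_subset_closedBall (by linarith)).trans hrange)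
  obtain ⟨x', rfl⟩ := hLj hxL
  obtain ⟨y', rfl⟩ := hLj hyL
  have hpre := h.preimage hj.continuous
  rw [preimage_union, preimage_iUnion₂] at hpre
  obtain ⟨J, hJS, hJ, hcomp⟩ := hpre.exists_subset_forall_component
    (isOpen_ball.isClosed_compl.preimage hj.continuous)
    fun p => isClosed_closedBall.preimage hj.continuous
  rw [← preimage_iUnion₂, ← preimage_union] at hJ
  obtain ⟨z, hzL, hz⟩ := hJ.inter_nonempty
    (hL.preimage_of_isOpenMap hj.injective hj.isOpenMap hLj) hxL hyL
  obtain ⟨a, haJ, hza⟩ : ∃ a ∈ J, dist (j z) a ≤ δ := by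
    simpa using hz.resolve_left (not_not.2 (hLR hzL))
  refine ⟨J, hJS, a, haJ, ?_, ?_⟩
  · linarith [dist_triangle_left a (j x') (j z), mem_ball.1 (hLτ hzL)]
  rw [or_iff_not_imp_left]
  intro hfar
  push Not at hfar
  have hdisj := (disjoint_biUnion_closedBall_component hfar).preimage j
  simp only [preimage_union, preimage_iUnion₂] at hdisj
  obtain ⟨hall, hsep⟩ := hcomp _ (Finset.filter_subset _ J)
    ⟨a, Finset.mem_filter.2 ⟨haJ, SimpleGraph.Reachable.refl a⟩⟩ hdisj
  rw [hall, ← preimage_iUnion₂] at hsep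
  refine ⟨fun b hb => (Finset.mem_filter.1 (hall.symm ▸ hb)).2, ?_⟩
  have hsub : ⋃ p ∈ J, closedBall p δ ⊆ closedBall (j x') (2 * R) := iUnion₂_subset fun p hp =>
    closedBall_subset_closedBall' (by linarith [hSR p (hJS hp)])
  have hKc := hj.isInducing.isCompact_preimage' (hcpt.of_isClosed_subset
    (isClosed_biUnion_closedBall J δ) hsub) (hsub.trans hrange)
  have hglob := hsep.image_of_isOpenEmbedding hE hj hKc
  rwa [image_preimage_eq_of_subset (hsub.trans hrange)] at hglob

end BallUnions

/-! ### Lower bound for the weights of a level set -/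

theorem le_two_pow_ellOf {lam : ℝ} (hlam : 0 < lam) : lam ≤ 2 ^ ellOf lam := by
  have h : Real.logb 2 lam ≤ (ellOf lam : ℝ) :=
    (Int.le_ceil _).trans (by exact_mod_cast Int.self_le_toNat ⌈Real.logb 2 lam⌉)
  rwa [Real.logb_le_iff_le_rpow one_lt_two hlam, Real.rpow_natCast] at h

section LevelSets

variable {X : Type*} [MetricSpace X]

theorem IsLLC.dist_lt_of_separates {lam : ℝ} (hX : IsLLC X lam) (hlam : 0 < lam) {K : Set X}
    {x y a : X} {s : ℝ} (hs : 0 < s) (hK : K ⊆ Metric.ball a s) (h : Separates K x y) :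
    dist x a < lam * s ∨ dist y a < lam * s := by
  by_contra! hfar
  obtain ⟨L, hL, hLs, hxL, hyL⟩ := (hX a (lam * s) (by positivity)).2 x y
    (by simpa using hfar.1) (by simpa using hfar.2)
  rw [mul_div_cancel_left₀ s hlam.ne'] at hLs
  obtain ⟨z, hzL, hzK⟩ := h.inter_nonempty hL.2.isPreconnected hxL hyL
  exact hLs hzL (hK hzK)

variable [MeasurableSpace X] {μ : Measure X} {CD : ℝ≥0} {J : Finset X} {x y a b o : X}
  {w : X → ℝ} {M : ℝ}

/-- The weight `1 / μ(B(x, d(x,p)))^{1/2} + 1 / μ(B(y, d(y,p)))^{1/2}` of a point `p` with respect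
to the poles `x` and `y`; its Riemann sums dominate `1` over every level set separating the
poles. -/
def poleKernel (μ : Measure X) (x y p : X) : ℝ :=
  1 / volRadius μ x (dist x p) + 1 / volRadius μ y (dist y p)

theorem poleKernel_comm (μ : Measure X) (x y p : X) :
    poleKernel μ x y p = poleKernel μ y x p :=
  add_comm _ _

theorem div_volRadius_le_mul_poleKernel (x y p : X) (hw : 0 ≤ w p) :
    w p / volRadius μ x (dist x p) ≤ w p * poleKernel μ x y p := by
  rw [poleKernel, mul_add, mul_one_div, mul_one_div]
  exact le_add_of_nonneg_right (div_nonneg hw (volRadius_nonneg _ _))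

namespace IsDoublingWith

theorem one_le_sum_div_volRadius (hd : IsDoublingWith μ CD) (hw : ∀ p ∈ J, 0 ≤ w p)
    (hM : 0 ≤ M) (hab : a ≠ b) (h : volRadius μ a (dist a b) ≤ M * ∑ p ∈ J, w p)
    {ρ : ℝ} {n : ℕ} (hJo : ∀ p ∈ J, o ≠ p) (hJρ : ∀ p ∈ J, dist o p ≤ ρ)
    (hρ : ρ + dist o a ≤ 2 ^ n * dist a b) :
    1 ≤ M * √CD ^ n * ∑ p ∈ J, w p / volRadius μ o (dist o p) := by
  have hpos : 0 < volRadius μ a (dist a b) := hd.volRadius_pos a (dist_pos.2 hab)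
  have hball : volRadius μ o ρ ≤ √CD ^ n * volRadius μ a (dist a b) :=
    (hd.volRadius_mono (ball_subset_ball' hρ)).trans
      (hd.volRadius_two_pow_mul_le a (dist_pos.2 hab) n)
  have hterm : ∀ p ∈ J, w p ≤ volRadius μ o ρ * (w p / volRadius μ o (dist o p)) := fun p hp => by
    rw [mul_div_left_comm]
    exact le_mul_of_one_le_right (hw p hp) ((one_le_div
      (hd.volRadius_pos o (dist_pos.2 (hJo p hp)))).2
      (hd.volRadius_mono (ball_subset_ball (hJρ p hp))))
  have hsum : 0 ≤ ∑ p ∈ J, w p / volRadius μ o (dist o p) :=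
    Finset.sum_nonneg fun p hp => div_nonneg (hw p hp) (volRadius_nonneg _ _)
  refine le_of_mul_le_mul_left ?_ hpos
  calc volRadius μ a (dist a b) * 1
      ≤ M * ∑ p ∈ J, w p := by rwa [mul_one]
    _ ≤ M * (volRadius μ o ρ * ∑ p ∈ J, w p / volRadius μ o (dist o p)) := by
        rw [Finset.mul_sum _ _ (volRadius μ o ρ)]
        gcongr with p hp
        exact hterm p hp
    _ ≤ M * (√CD ^ n * volRadius μ a (dist a b) *
          ∑ p ∈ J, w p / volRadius μ o (dist o p)) := by gcongr
    _ = volRadius μ a (dist a b) *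
          (M * √CD ^ n * ∑ p ∈ J, w p / volRadius μ o (dist o p)) := by ring

theorem one_le_sum_mul_poleKernel (hd : IsDoublingWith μ CD) (hw : ∀ p ∈ J, 0 ≤ w p)
    (hM : 0 ≤ M) (hab : a ≠ b) (h : volRadius μ a (dist a b) ≤ M * ∑ p ∈ J, w p)
    {ρ : ℝ} {n : ℕ} (hJx : ∀ p ∈ J, x ≠ p) (hJρ : ∀ p ∈ J, dist x p ≤ ρ)
    (hρ : ρ + dist x a ≤ 2 ^ n * dist a b) :
    1 ≤ M * √CD ^ n * ∑ p ∈ J, w p * poleKernel μ x y p := by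
  refine (hd.one_le_sum_div_volRadius hw hM hab h hJx hJρ hρ).trans ?_
  gcongr with p hp
  exact div_volRadius_le_mul_poleKernel x y p (hw p hp)

theorem one_le_sum_mul_poleKernel_of_separates (hd : IsDoublingWith μ CD) {lam : ℝ}
    (hlam : 1 ≤ lam) (hX : IsLLC X lam) (hw : ∀ p ∈ J, 0 ≤ w p) (hM : 0 ≤ M) {δ η : ℝ}
    (hδ : 0 < δ) (hδη : 16 * (lam * δ) ≤ η) (haJ : a ∈ J)
    (h : ∀ b ∈ J, η ≤ 4 * (lam * dist a b) → volRadius μ a (dist a b) ≤ M * ∑ p ∈ J, w p)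
    (hJx : ∀ p ∈ J, η ≤ 2 * dist x p) (hJy : ∀ p ∈ J, η ≤ 2 * dist y p)
    (hsep : Separates (⋃ p ∈ J, closedBall p δ) x y) :
    1 ≤ M * √CD ^ (3 + ellOf lam) * ∑ p ∈ J, w p * poleKernel μ x y p := by
  have hη : 0 < η := lt_of_lt_of_le (by positivity) hδη
  obtain ⟨b, hb, hmax⟩ := J.exists_max_image (dist a ·) ⟨a, haJ⟩
  set s := dist a b
  have hs : 0 ≤ s := dist_nonneg
  have hsub : ⋃ p ∈ J, closedBall p δ ⊆ Metric.ball a (s + 2 * δ) :=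
    iUnion₂_subset fun p hp => closedBall_subset_ball' (by
      linarith [hmax p hp, dist_comm p a])
  wlog hxa : dist x a < lam * (s + 2 * δ) generalizing x y
  · simp only [poleKernel_comm μ x y]
    exact this hJy hJx hsep.symm ((hX.dist_lt_of_separates (by positivity) (by positivity)
      hsub hsep).resolve_left hxa)
  have hηs : η ≤ 4 * (lam * s) := by linarith [hJx a haJ]
  have hδs : 2 * δ ≤ s := by nlinarith
  have hxa_le : dist x a ≤ 2 * (lam * s) := by nlinarith
  have hs_le : s ≤ lam * s := le_mul_of_one_le_left hs hlam
  have hab : a ≠ b := dist_pos.1 ((by positivity : 0 < 2 * δ).trans_le hδs)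
  refine hd.one_le_sum_mul_poleKernel hw hM hab (h b hb hηs)
    (fun p hp => dist_pos.1 (by linarith [hJx p hp])) (ρ := 3 * (lam * s))
    (fun p hp => by linarith [hmax p hp, dist_triangle x a p]) ?_
  calc 3 * (lam * s) + dist x a ≤ 2 ^ 3 * (lam * s) := by linarith [hxa_le]
    _ ≤ 2 ^ (3 + ellOf lam) * s := by
        rw [pow_add, mul_assoc]
        gcongr
        exact le_two_pow_ellOf (by positivity)

theorem volRadius_dist_le_sum_of_reachable (hd : IsDoublingWith μ CD) {ρ : ℝ} (hM : 0 ≤ M)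
    (haJ : a ∈ J) (hab : (proximityGraph J ρ).Reachable a b)
    (h : ENNReal.ofReal (volRadius μ a (dist a b)) ≤ ENNReal.ofReal M * qDelta μ 2 ρ a b) :
    volRadius μ a (dist a b) ≤ M * ∑ p ∈ J, volRadius μ p (2 * ρ) := by
  have hsum : 0 ≤ ∑ p ∈ J, volRadius μ p (2 * ρ) :=
    Finset.sum_nonneg fun p _ => volRadius_nonneg _ _
  rw [← ENNReal.ofReal_le_ofReal_iff (by positivity), ENNReal.ofReal_mul hM]
  exact h.trans (mul_le_mul_right (hd.qDelta_le_of_reachable haJ hab) _)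

end IsDoublingWith

end LevelSets

/-! ### Upper bound for the weak metric -/

section UpperBound

variable {X : Type*} [MetricSpace X]

/-- The closed ball of radius `R` about `x` is compact and lies in an open subset of `X`
homeomorphic to the model space `E`. -/
def IsChartBall (E : Type*) [TopologicalSpace E] (x : X) (R : ℝ) : Prop :=
  IsCompact (closedBall x R) ∧ ∃ j : E → X, IsOpenEmbedding j ∧ closedBall x R ⊆ range j

open Classical in
/-- The points of the net `N` at which the potential `D` is below `t` but which have a neighbour in
`N`, at scale `2 * δ`, where `D` is at least `t`: a discrete level set of `D`. -/
def levelBoundary (N : Finset X) (δ : ℝ) (D : X → ℝ≥0∞) (t : ℝ≥0∞) : Finset X :=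
  {p ∈ N | D p < t ∧ ∃ p' ∈ N, dist p p' ≤ 2 * δ ∧ t ≤ D p'}

theorem mem_levelBoundary {N : Finset X} {δ : ℝ} {D : X → ℝ≥0∞} {t : ℝ≥0∞} {p : X} :
    p ∈ levelBoundary N δ D t ↔
      p ∈ N ∧ D p < t ∧ ∃ p' ∈ N, dist p p' ≤ 2 * δ ∧ t ≤ D p' := by
  classical
  simp [levelBoundary]

variable {N S : Finset X} {D : X → ℝ≥0∞} {x y p : X} {δ η : ℝ} {t : ℝ≥0∞}

theorem le_dist_left_of_mem_levelBoundary (ht : 0 < t) (hDx : ∀ p ∈ Metric.ball x η, D p = 0)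
    (hp : p ∈ levelBoundary N δ D t) : η ≤ dist x p + 2 * δ := by
  obtain ⟨-, -, p', -, hpp', hp't⟩ := mem_levelBoundary.1 hp
  have hp' : p' ∉ Metric.ball x η := fun h => (hDx p' h ▸ hp't).not_gt ht
  rw [mem_ball', not_lt] at hp'
  linarith [dist_triangle x p p']

theorem le_dist_right_of_mem_levelBoundary (hDy : ∀ p ∈ Metric.ball y η, t ≤ D p)
    (hp : p ∈ levelBoundary N δ D t) : η ≤ dist y p := by
  by_contra! h
  exact (hDy p (mem_ball'.2 h)).not_gt (mem_levelBoundary.1 hp).2.1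

theorem separates_levelBoundary {B : Set X} (hB : IsOpen B) (hxB : x ∈ B) (hyB : y ∈ B)
    (hN : ∀ z ∈ B, ∃ p ∈ N, dist z p ≤ δ) (hδη : 3 * δ < η) (hδ : 0 ≤ δ) (ht : 0 < t)
    (hDx : ∀ p ∈ Metric.ball x η, D p = 0) (hDy : ∀ p ∈ Metric.ball y η, t ≤ D p) :
    Separates (Bᶜ ∪ ⋃ p ∈ levelBoundary N δ D t, closedBall p δ) x y := by
  refine separates_of_finite_net hB hxB hyB hN (P := (D · < t))
    (fun p hp p' hp' hpp' hlt hge =>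
      mem_levelBoundary.2 ⟨hp, hlt, p', hp', hpp', not_lt.1 hge⟩)
    (fun p hp => ?_) (fun p hp => ?_) (fun p _ hp => ?_) (fun p _ hp => not_lt.2 (hDy p ?_))
  · linarith [le_dist_left_of_mem_levelBoundary ht hDx hp]
  · linarith [le_dist_right_of_mem_levelBoundary hDy hp]
  · rwa [hDx p (mem_ball'.2 (by linarith))]
  · exact mem_ball'.2 (by linarith)

theorem le_sum_of_one_le_sum_levelBoundary {F : Finset X} {c w : X → ℝ} {T : ℝ}
    (hc : ∀ p ∈ F, 0 ≤ c p) (hw : ∀ p, 0 ≤ w p)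
    (hD : ∀ p p', dist p p' ≤ 2 * δ → D p' ≤ D p + ENNReal.ofReal (w p))
    (hF : ∀ t ∈ Ioo 0 T, levelBoundary N δ D (ENNReal.ofReal t) ⊆ F)
    (h : ∀ t ∈ Ioo 0 T, 1 ≤ ∑ p ∈ levelBoundary N δ D (ENNReal.ofReal t), c p) :
    T ≤ ∑ p ∈ F, c p * w p := by
  refine le_sum_mul_of_one_le_sum_filter F (a := fun p => (D p).toReal) hc (fun p _ => hw p)
    fun t ht => (h t ht).trans (Finset.sum_le_sum_of_subset_of_nonneg (fun p hp => ?_)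
      fun p hp _ => hc p (Finset.mem_filter.1 hp).1)
  obtain ⟨-, hpt, p', -, hpp', hp't⟩ := mem_levelBoundary.1 hp
  refine Finset.mem_filter.2
    ⟨hF t ht hp, (ENNReal.lt_ofReal_iff_toReal_lt hpt.ne_top).1 hpt, ?_⟩
  have hle := hp't.trans (hD p p' hpp')
  rwa [← ENNReal.ofReal_toReal hpt.ne_top, ← ENNReal.ofReal_add ENNReal.toReal_nonneg (hw p),
    ENNReal.ofReal_le_ofReal_iff (add_nonneg ENNReal.toReal_nonneg (hw p))] at hle

variable [MeasurableSpace X] {μ : Measure X} {CD : ℝ≥0}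

theorem poleKernel_nonneg (μ : Measure X) (x y p : X) : 0 ≤ poleKernel μ x y p :=
  add_nonneg (div_nonneg zero_le_one (volRadius_nonneg _ _))
    (div_nonneg zero_le_one (volRadius_nonneg _ _))

/-- The distance from the set `B`, measured by the sums defining `q^δ_{μ,2}`. -/
def qDeltaFrom (μ : Measure X) (δ : ℝ) (B : Set X) (z : X) : ℝ≥0∞ :=
  ⨅ x ∈ B, qDelta μ 2 δ x z

theorem qDeltaFrom_eq_zero {B : Set X} {z : X} (hz : z ∈ B) : qDeltaFrom μ δ B z = 0 :=
  nonpos_iff_eq_zero.1 ((iInf₂_le z hz).trans_eq qDelta_self)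

variable {E : Type*} [NormedAddCommGroup E] [NormedSpace ℝ E] [ProperSpace E]

namespace IsDoublingWith

theorem one_le_sum_mul_poleKernel_of_separates_ball (hd : IsDoublingWith μ CD)
    (hE : 1 < Module.rank ℝ E) {lam r M : ℝ} (hlam : 1 ≤ lam) (hX : IsLLC X lam)
    (hx : IsChartBall E x (2 * (4 * (lam * r)))) (hy : y ∈ Metric.ball x r) (hM : 0 ≤ M)
    (hδ : 0 < δ) (hδη : 16 * (lam * δ) ≤ η) (hδr : 4 * δ ≤ lam * r)
    (hS : ∀ p ∈ S, dist x p ≤ 4 * (lam * r)) (hSx : ∀ p ∈ S, η ≤ 2 * dist x p)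
    (hSy : ∀ p ∈ S, η ≤ 2 * dist y p)
    (hlow : ∀ a ∈ S, ∀ b ∈ S, min (η / (4 * lam)) (lam * r) ≤ dist a b →
      ENNReal.ofReal (volRadius μ a (dist a b)) ≤ ENNReal.ofReal M * qDelta μ 2 (2 * δ) a b)
    (hsep : Separates ((Metric.ball x (4 * (lam * r)))ᶜ ∪ ⋃ p ∈ S, closedBall p δ) x y) :
    1 ≤ M * √CD ^ (3 + ellOf lam) *
      ∑ p ∈ S, volRadius μ p (2 * (2 * δ)) * poleKernel μ x y p := by
  have hr : 0 < r := dist_nonneg.trans_lt hy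
  have hη : 0 < η := lt_of_lt_of_le (by positivity) hδη
  have hlamr : 0 < lam * r := by positivity
  obtain ⟨hcpt, j, hj, hrange⟩ := hx
  obtain ⟨L, hL, hLr, hxL, hyL⟩ := (hX x r hr).1 x (mem_ball_self hr) y hy
  obtain ⟨J, hJS, a, haJ, hax, hcase⟩ := hsep.exists_chain_or_separates hE hj
    (by linarith [hlamr]) (by linarith) hcpt hrange hL.2.isPreconnected hLr hxL hyL
    fun p hp => by rw [dist_comm]; exact hS p hp
  have hw : ∀ p ∈ J, 0 ≤ volRadius μ p (2 * (2 * δ)) := fun p _ => volRadius_nonneg _ _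
  have hchain : ∀ b ∈ J, (proximityGraph J (2 * δ)).Reachable a b →
      min (η / (4 * lam)) (lam * r) ≤ dist a b →
        volRadius μ a (dist a b) ≤ M * ∑ p ∈ J, volRadius μ p (2 * (2 * δ)) :=
    fun b hb hab hσ => hd.volRadius_dist_le_sum_of_reachable hM haJ hab
      (hlow a (hJS haJ) b (hJS hb) hσ)
  suffices 1 ≤ M * √CD ^ (3 + ellOf lam) *
      ∑ p ∈ J, volRadius μ p (2 * (2 * δ)) * poleKernel μ x y p by
    refine this.trans (mul_le_mul_of_nonneg_left (Finset.sum_le_sum_of_subset_of_nonneg hJS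
      fun p _ _ => mul_nonneg (volRadius_nonneg _ _) (poleKernel_nonneg _ _ _ _)) (by positivity))
  rcases hcase with ⟨b, hb, hab, hbx⟩ | ⟨hreach, hJsep⟩
  · have hdist : 2 * (lam * r) ≤ dist a b := by
      linarith [dist_triangle_left b x a]
    refine hd.one_le_sum_mul_poleKernel hw hM (dist_pos.1 (by linarith))
      (hchain b hb hab ((min_le_right _ _).trans (by linarith)))
      (fun p hp => dist_pos.1 (by linarith [hSx p (hJS hp)])) (fun p hp => hS p (hJS hp)) ?_
    calc 4 * (lam * r) + dist x a ≤ 2 ^ 3 * dist a b := by linarith [dist_comm x a]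
      _ ≤ 2 ^ (3 + ellOf lam) * dist a b := by gcongr <;> norm_num
  · exact hd.one_le_sum_mul_poleKernel_of_separates hlam hX hw hM hδ hδη haJ
      (fun b hb hηb => hchain b hb (hreach b hb) ((min_le_left _ _).trans
        ((div_le_iff₀' (by positivity)).2 (by rwa [mul_assoc]))))
      (fun p hp => hSx p (hJS hp)) (fun p hp => hSy p (hJS hp)) hJsep

theorem sum_sq_mul_poleKernel_le [OpensMeasurableSpace X] (hd : IsDoublingWith μ CD)
    {F : Finset X} {R : ℝ} (hδ : 0 < δ) (hF : (F : Set X).Pairwise (δ < dist · ·))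
    (hx : ∀ p ∈ F, δ / 2 ≤ dist x p) (hy : ∀ p ∈ F, δ / 2 ≤ dist y p)
    (hR : ∀ p ∈ F, dist p x + δ / 2 ≤ R) :
    ∑ p ∈ F, volRadius μ p (2 * (2 * δ)) ^ 2 * poleKernel μ x y p ≤
      4 * CD ^ 3 * √CD * volRadius μ x R := by
  have hF' : (F : Set X).Pairwise fun p p' => 2 * (δ / 2) ≤ dist p p' :=
    hF.mono' fun p p' h => by linarith
  have hsq : ∀ p, volRadius μ p (2 * (2 * δ)) ^ 2 ≤ CD ^ 3 * μ.real (Metric.ball p (δ / 2)) :=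
    fun p => by
      rw [sq_volRadius, show 2 * (2 * δ) = 2 ^ 3 * (δ / 2) by ring]
      exact hd.measureReal_ball_two_pow_mul_le p (half_pos hδ) 3
  calc ∑ p ∈ F, volRadius μ p (2 * (2 * δ)) ^ 2 * poleKernel μ x y p
      ≤ ∑ p ∈ F, CD ^ 3 * μ.real (Metric.ball p (δ / 2)) * poleKernel μ x y p := by
        gcongr with p
        · exact poleKernel_nonneg _ _ _ _
        · exact hsq p
    _ = CD ^ 3 * (∑ p ∈ F, μ.real (Metric.ball p (δ / 2)) / volRadius μ x (dist x p) +
          ∑ p ∈ F, μ.real (Metric.ball p (δ / 2)) / volRadius μ y (dist y p)) := by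
        simp only [poleKernel, Finset.mul_sum, ← Finset.sum_add_distrib]
        exact Finset.sum_congr rfl fun p _ => by ring
    _ ≤ CD ^ 3 * (2 * √CD * volRadius μ x R + 2 * √CD * volRadius μ x R) := by
        gcongr
        · exact hd.sum_measureReal_div_volRadius_le (half_pos hδ) hF' hx hR
        · exact hd.sum_measureReal_div_volRadius_le (half_pos hδ) hF' hy hR
    _ = 4 * CD ^ 3 * √CD * volRadius μ x R := by ring

theorem qDeltaFrom_le_add (hd : IsDoublingWith μ CD) {B : Set X} {z z' : X}
    (h : dist z z' ≤ δ) :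
    qDeltaFrom μ δ B z' ≤ qDeltaFrom μ δ B z + ENNReal.ofReal (volRadius μ z (2 * δ)) := by
  simp only [qDeltaFrom, ENNReal.iInf_add]
  exact iInf₂_mono fun x _ =>
    qDelta_triangle.trans (add_le_add_right (hd.qDelta_le_ofReal_volRadius h) _)

theorem le_mul_sum_sq_mul_poleKernel (hd : IsDoublingWith μ CD) (hE : 1 < Module.rank ℝ E)
    {lam r M T : ℝ} (hlam : 1 ≤ lam) (hX : IsLLC X lam)
    (hx : IsChartBall E x (2 * (4 * (lam * r)))) (hy : y ∈ Metric.ball x r) (hM : 0 ≤ M)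
    (hδ : 0 < δ) (hδη : 16 * (lam * δ) ≤ η) (hδr : 4 * δ ≤ lam * r)
    (hNx : ∀ p ∈ N, dist x p ≤ 4 * (lam * r))
    (hN : ∀ z ∈ Metric.ball x (4 * (lam * r)), ∃ p ∈ N, dist z p ≤ δ)
    (hlow : ∀ a ∈ N, ∀ b ∈ N, min (η / (4 * lam)) (lam * r) ≤ dist a b →
      ENNReal.ofReal (volRadius μ a (dist a b)) ≤ ENNReal.ofReal M * qDelta μ 2 (2 * δ) a b)
    (hD : ∀ p p', dist p p' ≤ 2 * δ → D p' ≤ D p + ENNReal.ofReal (volRadius μ p (2 * (2 * δ))))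
    (hDx : ∀ p ∈ Metric.ball x η, D p = 0)
    (hDy : ∀ p ∈ Metric.ball y η, ENNReal.ofReal T ≤ D p) :
    T ≤ M * √CD ^ (3 + ellOf lam) * ∑ p ∈ N with η ≤ 2 * dist x p ∧ η ≤ 2 * dist y p,
      volRadius μ p (2 * (2 * δ)) ^ 2 * poleKernel μ x y p := by
  have hr : 0 < r := dist_nonneg.trans_lt hy
  have hrlam : r ≤ lam * r := le_mul_of_one_le_left hr.le hlam
  have hδlam : δ ≤ lam * δ := le_mul_of_one_le_left hδ.le hlam
  set w : X → ℝ := fun p => volRadius μ p (2 * (2 * δ))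
  set C := M * √CD ^ (3 + ellOf lam)
  have hDyt : ∀ t < T, ∀ p ∈ Metric.ball y η, ENNReal.ofReal t ≤ D p := fun t ht p hp =>
    (ENNReal.ofReal_le_ofReal ht.le).trans (hDy p hp)
  have hlevel : ∀ t ∈ Ioo 0 T, ∀ p ∈ levelBoundary N δ D (ENNReal.ofReal t),
      p ∈ N ∧ η ≤ 2 * dist x p ∧ η ≤ 2 * dist y p := fun t ht p hp =>
    ⟨(mem_levelBoundary.1 hp).1,
      by linarith [le_dist_left_of_mem_levelBoundary (ENNReal.ofReal_pos.2 ht.1) hDx hp],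
      by linarith [le_dist_right_of_mem_levelBoundary (hDyt t ht.2) hp]⟩
  have hone : ∀ t ∈ Ioo 0 T, 1 ≤
      ∑ p ∈ levelBoundary N δ D (ENNReal.ofReal t), C * (w p * poleKernel μ x y p) :=
    fun t ht => by
      rw [← Finset.mul_sum]
      exact hd.one_le_sum_mul_poleKernel_of_separates_ball hE hlam hX hx hy hM hδ hδη hδr
        (fun p hp => hNx p (hlevel t ht p hp).1) (fun p hp => (hlevel t ht p hp).2.1)
        (fun p hp => (hlevel t ht p hp).2.2)
        (fun a ha b hb => hlow a (hlevel t ht a ha).1 b (hlevel t ht b hb).1)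
        (separates_levelBoundary isOpen_ball (mem_ball_self (by positivity))
          (ball_subset_ball (by linarith) hy) hN (by linarith) hδ.le
          (ENNReal.ofReal_pos.2 ht.1) hDx (hDyt t ht.2))
  refine (le_sum_of_one_le_sum_levelBoundary (fun p _ => mul_nonneg (by positivity)
    (mul_nonneg (volRadius_nonneg _ _) (poleKernel_nonneg _ _ _ _)))
    (fun p => volRadius_nonneg _ _) hD
    (fun t ht p hp => Finset.mem_filter.2 (hlevel t ht p hp)) hone).trans_eq ?_
  rw [Finset.mul_sum]
  exact Finset.sum_congr rfl fun p _ => by ring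

theorem le_mul_volRadius_of_forall_le_qDelta [OpensMeasurableSpace X]
    (hd : IsDoublingWith μ CD) (hE : 1 < Module.rank ℝ E) {lam r M T : ℝ} (hlam : 1 ≤ lam)
    (hX : IsLLC X lam) (hx : IsChartBall E x (2 * (4 * (lam * r)))) (hy : y ∈ Metric.ball x r)
    (hM : 0 ≤ M) (hδ : 0 < δ) (hδη : 16 * (lam * δ) ≤ η) (hδr : 4 * δ ≤ lam * r)
    (hlow : ∀ a ∈ closedBall x (2 * (4 * (lam * r))), ∀ b ∈ closedBall x (2 * (4 * (lam * r))),
      min (η / (4 * lam)) (lam * r) ≤ dist a b →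
      ENNReal.ofReal (volRadius μ a (dist a b)) ≤ ENNReal.ofReal M * qDelta μ 2 (2 * δ) a b)
    (hT : ∀ x' ∈ Metric.ball x η, ∀ y' ∈ Metric.ball y η,
      ENNReal.ofReal T ≤ qDelta μ 2 (2 * δ) x' y') :
    T ≤ 4 * M * CD ^ 3 * √CD * (√CD ^ (3 + ellOf lam)) ^ 2 * volRadius μ x r := by
  have hr : 0 < r := dist_nonneg.trans_lt hy
  have hlamr : 0 < lam * r := by positivity
  have hδlam : δ ≤ lam * δ := le_mul_of_one_le_left hδ.le hlam
  have hball : closedBall x (4 * (lam * r)) ⊆ closedBall x (2 * (4 * (lam * r))) :=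
    closedBall_subset_closedBall (by linarith [hlamr])
  obtain ⟨N, hNx, hNsep, hN⟩ :=
    exists_finset_net (hx.1.of_isClosed_subset isClosed_closedBall hball) hδ
  have hdist : ∀ p ∈ N, dist x p ≤ 4 * (lam * r) := fun p hp => mem_closedBall'.1 (hNx hp)
  have hsum := hd.le_mul_sum_sq_mul_poleKernel hE hlam hX hx hy hM hδ hδη hδr hdist
    (fun z hz => hN z (ball_subset_closedBall hz))
    (fun a ha b hb => hlow a (hball (hNx ha)) b (hball (hNx hb)))
    (D := qDeltaFrom μ (2 * δ) (Metric.ball x η)) (fun p p' => hd.qDeltaFrom_le_add)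
    (fun p hp => qDeltaFrom_eq_zero hp)
    (fun p hp => le_iInf₂ fun x' hx' => hT x' hx' p hp)
  have hscale : 2 ^ 3 * (lam * r) ≤ 2 ^ (3 + ellOf lam) * r := by
    rw [pow_add, mul_assoc]
    gcongr
    exact le_two_pow_ellOf (by positivity)
  have hpack := hd.sum_sq_mul_poleKernel_le (x := x) (y := y) (R := 2 ^ (3 + ellOf lam) * r) hδ
    (hNsep.mono (Finset.filter_subset (fun p => η ≤ 2 * dist x p ∧ η ≤ 2 * dist y p) N))
    (fun p hp => by linarith [(Finset.mem_filter.1 hp).2.1])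
    (fun p hp => by linarith [(Finset.mem_filter.1 hp).2.2])
    (fun p hp => by linarith [hdist p (Finset.mem_filter.1 hp).1, dist_comm x p])
  calc T ≤ M * √CD ^ (3 + ellOf lam) *
        (4 * CD ^ 3 * √CD * (√CD ^ (3 + ellOf lam) * volRadius μ x r)) := by
        refine hsum.trans (mul_le_mul_of_nonneg_left (hpack.trans ?_) (by positivity))
        gcongr
        exact hd.volRadius_two_pow_mul_le x hr _
    _ = 4 * M * CD ^ 3 * √CD * (√CD ^ (3 + ellOf lam)) ^ 2 * volRadius μ x r := by ring

theorem qmu_le_mul_volRadius [PerfectSpace X] [OpensMeasurableSpace X]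
    (hd : IsDoublingWith μ CD) {CW : ℝ≥0} (hw : IsWMDM μ 2 CW) (hE : 1 < Module.rank ℝ E)
    {lam r : ℝ} (hlam : 1 ≤ lam) (hX : IsLLC X lam)
    (hx : IsChartBall E x (2 * (4 * (lam * r)))) (hy : y ∈ Metric.ball x r) :
    qmu μ 2 x y ≤ ENNReal.ofReal (8 * CW * CD ^ (7 + ellOf lam) * volRadius μ x r) := by
  have hr : 0 < r := dist_nonneg.trans_lt hy
  refine qmu_le fun δ₀ hδ₀ => le_of_not_gt fun hlt => ?_
  obtain ⟨T, -, hCT, hTq⟩ := ENNReal.lt_iff_exists_real_btwn.1 hlt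
  obtain ⟨η, hη, hηT⟩ := Metric.eventually_nhds_iff_ball.1
    (hd.lowerSemicontinuous_qDelta two_pos hδ₀ (x, y) _ hTq)
  obtain ⟨δ₁, hδ₁, hlow⟩ := hw.exists_ofReal_volRadius_le_qDelta hd hx.1
    (σ := min (η / (4 * lam)) (lam * r)) (by positivity)
  set δ := min (min δ₀ δ₁ / 2) (min (η / (16 * lam)) (lam * r / 4))
  have hδ : 0 < δ := by positivity
  have hδ₀₁ : 2 * δ ≤ min δ₀ δ₁ := by
    linarith [min_le_left (min δ₀ δ₁ / 2) (min (η / (16 * lam)) (lam * r / 4))]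
  have hδη : δ ≤ η / (16 * lam) := (min_le_right _ _).trans (min_le_left _ _)
  have hδr : δ ≤ lam * r / 4 := (min_le_right _ _).trans (min_le_right _ _)
  rw [le_div_iff₀ (by positivity)] at hδη
  have hT := hd.le_mul_volRadius_of_forall_le_qDelta hE hlam hX hx hy (by positivity) hδ
    (by linarith) (by linarith) (hlow (2 * δ) (hδ₀₁.trans (min_le_right _ _)))
    fun x' hx' y' hy' => (hηT (x', y') (by
      rw [← ball_prod_same]
      exact ⟨hx', hy'⟩)).le.trans (qDelta_anti (hδ₀₁.trans (min_le_left _ _)))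
  refine ((ENNReal.ofReal_lt_ofReal_iff_of_nonneg (mul_nonneg (by positivity)
    (volRadius_nonneg _ _))).1 hCT).not_ge (hT.trans_eq ?_)
  have hsq : √(CD : ℝ) ^ 2 = CD := Real.sq_sqrt (NNReal.coe_nonneg CD)
  calc _ = 8 * CW * CD ^ 3 * (√(CD : ℝ) ^ 2) ^ (4 + ellOf lam) * volRadius μ x r := by ring
    _ = _ := by
      rw [hsq]
      ring

end IsDoublingWith

end UpperBound

/-! ### Charts -/

section Charts

theorem exists_isOpenEmbedding_apply_zero (E : Type*) {X : Type*} [NormedAddCommGroup E]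
    [NormedSpace ℝ E] [TopologicalSpace X] [ChartedSpace E X] (x : X) :
    ∃ j : E → X, IsOpenEmbedding j ∧ j 0 = x := by
  set ψ := chartAt E x
  obtain ⟨r, hr, hball⟩ := Metric.isOpen_iff.1 ψ.open_target _ (mem_chart_target E x)
  set J := (OpenPartialHomeomorph.univBall (ψ x) r).trans ψ.symm
  have hJ : J.source = univ := by
    refine eq_univ_of_forall fun z => ⟨by simp, hball ?_⟩
    rw [← OpenPartialHomeomorph.univBall_target (ψ x) hr]
    exact OpenPartialHomeomorph.map_source _ (by simp)
  refine ⟨J, J.isOpenEmbedding hJ, ?_⟩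
  rw [OpenPartialHomeomorph.trans_apply, OpenPartialHomeomorph.univBall_apply_zero]
  exact ψ.left_inv (mem_chart_source E x)

theorem perfectSpace_of_chartedSpace (E X : Type*) [NormedAddCommGroup E] [NormedSpace ℝ E]
    [Nontrivial E] [TopologicalSpace X] [ChartedSpace E X] : PerfectSpace X := by
  refine perfectSpace_iff_forall_not_isolated.2 fun x => ?_
  obtain ⟨j, hj, rfl⟩ := exists_isOpenEmbedding_apply_zero E x
  have : (𝓝[≠] (0 : E)).NeBot := Module.punctured_nhds_neBot ℝ E 0
  have hlim : Tendsto j (𝓝[≠] 0) (𝓝[≠] (j 0)) := hj.continuous.continuousAt.tendsto.inf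
    (tendsto_principal_principal.2 fun z hz => hj.injective.ne hz)
  exact hlim.neBot

theorem IsChartBall.mono {E X : Type*} [TopologicalSpace E] [MetricSpace X] {x : X} {r R : ℝ}
    (h : IsChartBall E x R) (hr : r ≤ R) : IsChartBall E x r := by
  obtain ⟨hcpt, j, hj, hrange⟩ := h
  have hsub := closedBall_subset_closedBall (x := x) hr
  exact ⟨hcpt.of_isClosed_subset isClosed_closedBall hsub, j, hj, hsub.trans hrange⟩

theorem exists_isChartBall (E : Type*) {X : Type*} [NormedAddCommGroup E] [NormedSpace ℝ E]
    [ProperSpace E] [MetricSpace X] [ChartedSpace E X] (x : X) : ∃ R > 0, IsChartBall E x R := by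
  obtain ⟨j, hj, rfl⟩ := exists_isOpenEmbedding_apply_zero E x
  obtain ⟨R, hR, hsub⟩ := Metric.nhds_basis_closedBall.mem_iff.1
    (hj.isOpenMap.image_mem_nhds (closedBall_mem_nhds (0 : E) one_pos))
  exact ⟨R, hR, ((isCompact_closedBall _ _).image hj.continuous).of_isClosed_subset
    isClosed_closedBall hsub, j, hj, hsub.trans (image_subset_range _ _)⟩

variable {E X Y : Type*} [NormedAddCommGroup E] [NormedSpace ℝ E] [ProperSpace E]
  [MetricSpace X] [ChartedSpace E X] [MeasurableSpace X] [OpensMeasurableSpace X]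
  {μ : Measure X} {CD CW : ℝ≥0}

theorem IsDoublingWith.eventually_ediam_image_ball_sq_le [PseudoEMetricSpace Y]
    (hd : IsDoublingWith μ CD) (hw : IsWMDM μ 2 CW) (hE : 1 < Module.rank ℝ E) {lam : ℝ}
    (hlam : 1 ≤ lam) (hX : IsLLC X lam) {f : X → Y}
    (hf : ∀ x y, edist (f x) (f y) ≤ qmu μ 2 x y) (x : X) :
    ∀ᶠ r in 𝓝[>] 0, ediam (f '' Metric.ball x r) ^ (2 : ℝ) ≤
      (2 * (8 * CW * CD ^ (7 + ellOf lam))) ^ 2 * μ (Metric.ball x r) := by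
  have : Nontrivial E := rank_pos_iff_nontrivial.1 (zero_lt_one.trans hE)
  have : PerfectSpace X := perfectSpace_of_chartedSpace E X
  obtain ⟨R, hR, hx⟩ := exists_isChartBall E x
  filter_upwards [Ioc_mem_nhdsGT (show 0 < R / (8 * lam) by positivity)] with r hr
  have hxr : IsChartBall E x (2 * (4 * (lam * r))) := hx.mono <| by
    linarith [(le_div_iff₀ (by positivity)).1 hr.2]
  set K : ℝ≥0∞ := 8 * CW * CD ^ (7 + ellOf lam)
  have hball : f '' Metric.ball x r ⊆
      closedEBall (f x) (K * μ (Metric.ball x r) ^ (1 / 2 : ℝ)) := by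
    rintro _ ⟨y, hy, rfl⟩
    rw [mem_closedEBall', ← hd.ofReal_volRadius]
    refine ((hf x y).trans (hd.qmu_le_mul_volRadius hw hE hlam hX hxr hy)).trans_eq ?_
    rw [ENNReal.ofReal_mul (by positivity), ENNReal.ofReal_mul (by positivity),
      ENNReal.ofReal_mul (by positivity), ENNReal.ofReal_pow (by positivity)]
    simp only [ENNReal.ofReal_coe_nnreal, ENNReal.ofReal_ofNat, K]
  calc ediam (f '' Metric.ball x r) ^ (2 : ℝ)
      ≤ (2 * (K * μ (Metric.ball x r) ^ (1 / 2 : ℝ))) ^ (2 : ℝ) := by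
        gcongr
        exact (ediam_mono hball).trans ediam_closedEBall_le
    _ = (2 * K) ^ 2 * μ (Metric.ball x r) := by
        rw [← mul_assoc, ENNReal.mul_rpow_of_nonneg _ _ zero_le_two, ← ENNReal.rpow_mul]
        norm_num

end Charts

/-! ### Hausdorff measure of images of open sets -/

section Hausdorff

variable {X Y : Type*} [MetricSpace X] [MeasurableSpace X] [OpensMeasurableSpace X]
  {μ : Measure X} {CD : ℝ≥0}

namespace IsDoublingWith

theorem exists_countable_disjoint_ball_cover (hd : IsDoublingWith μ CD) {O : Set X} {ρ : X → ℝ}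
    (hρ : ∀ x ∈ O, ρ x ∈ Ioc 0 1) (hρO : ∀ x ∈ O, closedBall x (ρ x) ⊆ O) :
    ∃ u ⊆ O, u.Countable ∧ (O ⊆ ⋃ x : u, Metric.ball (x : X) (2 ^ 3 * ρ x)) ∧
      ∑' x : u, μ (Metric.ball (x : X) (ρ x)) ≤ μ O := by
  obtain ⟨u, huO, hdisj, hcov⟩ :=
    Vitali.exists_disjoint_subfamily_covering_enlargement_closedBall O id ρ 1
      (fun x hx => (hρ x hx).2) 5 (by norm_num)
  have hball : Pairwise (Function.onFun Disjoint fun x : u => Metric.ball (x : X) (ρ x)) :=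
    fun x y hxy => (hdisj x.2 y.2 (Subtype.coe_ne_coe.2 hxy)).mono ball_subset_closedBall
      ball_subset_closedBall
  have := hd.sigmaFinite
  have hu : u.Countable := by
    have h := Measure.countable_meas_pos_of_disjoint_iUnion (μ := μ)
      (fun x : u => measurableSet_ball) hball
    have hpos : {x : u | 0 < μ (Metric.ball (x : X) (ρ x))} = univ :=
      eq_univ_of_forall fun x => (hd.1 x _ (hρ x (huO x.2)).1).1
    rwa [hpos, countable_univ_iff, countable_coe_iff] at h
  have : Countable u := hu.to_subtype
  refine ⟨u, huO, hu, fun x hx => ?_, ?_⟩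
  · obtain ⟨y, hy, hsub⟩ := hcov x hx
    have hxy : dist x y ≤ 5 * ρ y := hsub (mem_closedBall_self (hρ x hx).1.le)
    exact mem_iUnion.2 ⟨⟨y, hy⟩, mem_ball.2 (by linarith [(hρ y (huO hy)).1])⟩
  · rw [← measure_iUnion hball fun _ => measurableSet_ball]
    exact measure_mono (iUnion_subset fun x =>
      ball_subset_closedBall.trans (hρO x (huO x.2)))

variable [PerfectSpace X] {s : ℝ} {c : ℝ≥0∞} {f : X → Y} {O : Set X}

theorem exists_radius_ediam_image_ball_le [PseudoEMetricSpace Y] (hd : IsDoublingWith μ CD)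
    (hs : 0 < s) (hc : c ≠ ∞) {x : X}
    (hf : ∀ᶠ r in 𝓝[>] 0, ediam (f '' Metric.ball x r) ^ s ≤ c * μ (Metric.ball x r))
    (hO : O ∈ 𝓝 x) {ε : ℝ≥0∞} (hε : 0 < ε) :
    ∃ ρ ∈ Ioc (0 : ℝ) 1, closedBall x ρ ⊆ O ∧ ediam (f '' Metric.ball x (2 ^ 3 * ρ)) ≤ ε ∧
      ediam (f '' Metric.ball x (2 ^ 3 * ρ)) ^ s ≤ c * CD ^ 3 * μ (Metric.ball x ρ) := by
  have hlim : Tendsto (fun r => c * μ (Metric.ball x r)) (𝓝[>] 0) (𝓝 0) := by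
    simpa using ENNReal.Tendsto.const_mul (hd.tendsto_measure_ball_nhdsGT_zero x) (Or.inr hc)
  have hsmall : ∀ᶠ r in 𝓝[>] 0, ediam (f '' Metric.ball x r) ≤ ε := by
    filter_upwards [hf, hlim.eventually_le_const (ENNReal.rpow_pos_of_nonneg hε hs.le)] with r h₁ h₂
    exact (ENNReal.rpow_le_rpow_iff hs).1 (h₁.trans h₂)
  have hscale : Tendsto (fun ρ : ℝ => 2 ^ 3 * ρ) (𝓝[>] 0) (𝓝[>] 0) := by
    refine tendsto_nhdsWithin_iff.2 ⟨?_, eventually_mem_nhdsWithin.mono fun ρ hρ =>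
      mem_Ioi.2 (mul_pos (by norm_num) hρ)⟩
    exact (continuous_const_mul _).tendsto' 0 0 (mul_zero _) |>.mono_left nhdsWithin_le_nhds
  obtain ⟨r, hr, hrO⟩ := Metric.nhds_basis_closedBall.mem_iff.1 hO
  obtain ⟨ρ, ⟨hρ, hρε⟩, hρr⟩ := (((hscale.eventually (hf.and hsmall)).and
    (Ioc_mem_nhdsGT (lt_min one_pos hr)))).exists
  refine ⟨ρ, ⟨hρr.1, hρr.2.trans (min_le_left _ _)⟩,
    (closedBall_subset_closedBall (hρr.2.trans (min_le_right _ _))).trans hrO, hρε, hρ.trans ?_⟩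
  rw [mul_assoc]
  gcongr
  exact hd.measure_ball_two_pow_mul_le x hρr.1 3

theorem hausdorffMeasure_image_le [EMetricSpace Y] [MeasurableSpace Y] [BorelSpace Y]
    (hd : IsDoublingWith μ CD) (hs : 0 < s) (hc : c ≠ ∞)
    (hf : ∀ x, ∀ᶠ r in 𝓝[>] 0, ediam (f '' Metric.ball x r) ^ s ≤ c * μ (Metric.ball x r))
    (hO : IsOpen O) : μH[s] (f '' O) ≤ c * CD ^ 3 * μ O := by
  obtain ⟨ε, -, hε, hε₀⟩ := exists_seq_strictAnti_tendsto' (zero_lt_one' ℝ≥0∞)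
  choose! ρ hρ hρO hρε hρs using fun n x (hx : x ∈ O) =>
    hd.exists_radius_ediam_image_ball_le hs hc (hf x) (hO.mem_nhds hx) (hε n).1
  choose u huO hu hcov hsum using fun n =>
    hd.exists_countable_disjoint_ball_cover (hρ n) (hρO n)
  have (n : ℕ) : Countable (u n) := (hu n).to_subtype
  have hle (n : ℕ) : ∑' x : u n, ediam (f '' Metric.ball x (2 ^ 3 * ρ n x)) ^ s ≤
      c * CD ^ 3 * μ O := by
    calc _ ≤ ∑' x : u n, c * CD ^ 3 * μ (Metric.ball x (ρ n x)) :=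
          ENNReal.tsum_le_tsum fun x => hρs n x (huO n x.2)
      _ ≤ c * CD ^ 3 * μ O := by
          rw [ENNReal.tsum_mul_left]
          gcongr
          exact hsum n
  refine (Measure.hausdorffMeasure_le_liminf_tsum s (f '' O) ε hε₀
    (fun n (x : u n) => f '' Metric.ball x (2 ^ 3 * ρ n x))
    (Eventually.of_forall fun n x => hρε n x (huO n x.2))
    (Eventually.of_forall fun n => by
      rw [← image_iUnion]
      exact image_mono (hcov n))).trans ?_
  exact liminf_le_of_le (by isBoundedDefault) fun b hb =>
    hb.exists.elim fun n hn => hn.trans (hle n)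

end IsDoublingWith

end Hausdorff

/-! ### Crossings and line integrals -/

section Crossing

variable {f : ℝ → ℝ} {a b α β : ℝ}

theorem exists_first_hitting (hf : ContinuousOn f (Icc a b)) (hab : a ≤ b) (ha : f a ≤ β)
    (hb : β ≤ f b) : ∃ t ∈ Icc a b, f t = β ∧ ∀ u ∈ Icc a b, β ≤ f u → t ≤ u := by
  obtain ⟨t, ⟨ht, htβ⟩, hmin⟩ := (isCompact_Icc.of_isClosed_subset
    (hf.preimage_isClosed_of_isClosed isClosed_Icc isClosed_Ici) inter_subset_left).exists_isLeast
    ⟨b, right_mem_Icc.2 hab, hb⟩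
  obtain ⟨u, hu, rfl⟩ := intermediate_value_Icc ht.1 (hf.mono (Icc_subset_Icc_right ht.2))
    ⟨ha, htβ⟩
  have htu : t ≤ u := hmin ⟨⟨hu.1, hu.2.trans ht.2⟩, le_refl (f u)⟩
  exact ⟨t, ht, congrArg f (htu.antisymm hu.2), fun v hv hβv => hmin ⟨hv, hβv⟩⟩

theorem exists_last_exit (hf : ContinuousOn f (Icc a b)) (hab : a ≤ b) (ha : f a ≤ α)
    (hb : α ≤ f b) : ∃ s ∈ Icc a b, f s = α ∧ ∀ u ∈ Icc a b, f u ≤ α → u ≤ s := by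
  have hneg : MapsTo Neg.neg (Icc (-b) (-a)) (Icc a b) := fun u hu =>
    ⟨le_neg.1 hu.2, neg_le.1 hu.1⟩
  obtain ⟨t, ht, hft, hmin⟩ := exists_first_hitting (f := fun u => -f (-u)) (β := -α)
    (hf.comp continuousOn_neg hneg).neg (neg_le_neg hab) (by simpa using hb) (by simpa using ha)
  refine ⟨-t, hneg ht, neg_injective hft, fun u hu hfu => le_neg.1 (hmin (-u) ?_ ?_)⟩
  · exact ⟨neg_le_neg hu.2, neg_le_neg hu.1⟩
  · simpa using hfu

theorem exists_crossing (hf : ContinuousOn f (Icc a b)) (ha : f a < α) (hαβ : α ≤ β)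
    (hb : β < f b) (hab : a ≤ b) :
    ∃ s t, a < s ∧ s ≤ t ∧ t < b ∧ f s = α ∧ f t = β ∧ (∀ u ∈ Icc s t, f u ∈ Icc α β) ∧
      ∀ u ∈ Icc a b, β ≤ f u → t ≤ u := by
  obtain ⟨t, ht, hft, hmin⟩ := exists_first_hitting hf hab (ha.le.trans hαβ) hb.le
  obtain ⟨s, hs, hfs, hmax⟩ := exists_last_exit (hf.mono (Icc_subset_Icc_right ht.2)) ht.1 ha.le
    (hαβ.trans hft.ge)
  refine ⟨s, t, hs.1.lt_of_ne ?_, hs.2, ht.2.lt_of_ne ?_, hfs, hft, fun u hu => ⟨?_, ?_⟩, hmin⟩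
  · rintro rfl
    exact ha.ne hfs
  · rintro rfl
    exact hb.ne' hft
  · by_contra! hlt
    have hus := hmax u ⟨hs.1.trans hu.1, hu.2⟩ hlt.le
    exact hlt.ne (hus.antisymm hu.1 ▸ hfs)
  · by_contra! hlt
    have htu := hmin u ⟨hs.1.trans hu.1, hu.2.trans ht.2⟩ hlt.le
    exact hlt.ne' (hu.2.antisymm htu ▸ hft)

theorem sum_range_le_openLineIntegral {Y : Type*} [PseudoEMetricSpace Y] (ρ : Y → ℝ≥0∞)
    (γ : ℝ → Y) {n : ℕ} {s t : ℕ → ℝ} (hs : 0 < s 0) (ht : t n < 1) (hst : ∀ j ≤ n, s j ≤ t j)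
    (hts : ∀ j < n, t j ≤ s (j + 1)) :
    ∑ j ∈ Finset.range (n + 1), (⨅ u ∈ Icc (s j) (t j), ρ (γ u)) * edist (γ (s j)) (γ (t j)) ≤
      openLineIntegral ρ γ := by
  set T : ℕ → ℝ := fun m => if Even m then s (m / 2) else t (m / 2)
  have hTs (i : ℕ) : T (2 * i) = s i := by simp [T]
  have hTt (i : ℕ) : T (2 * i + 1) = t i := by
    simp [T, show (2 * i + 1) / 2 = i by lia]
  have hT : ∀ m < 2 * n + 1, T m ≤ T (m + 1) := fun m hm => by
    obtain ⟨i, rfl | rfl⟩ := Nat.even_or_odd' m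
    · rw [hTs, hTt]
      exact hst i (by lia)
    · rw [hTt, show 2 * i + 1 + 1 = 2 * (i + 1) by ring, hTs]
      exact hts i (by lia)
  have hTmono : T (2 * 0) ≤ T (2 * n + 1) :=
    monotoneOn_of_le_add_one ordConnected_Iic (fun m _ _ hm => hT m hm) (mem_Iic.2 (by lia))
      (mem_Iic.2 le_rfl) (by lia)
  rw [hTs, hTt] at hTmono
  calc ∑ j ∈ Finset.range (n + 1), (⨅ u ∈ Icc (s j) (t j), ρ (γ u)) * edist (γ (s j)) (γ (t j))
      = ∑ m ∈ (Finset.range (n + 1)).image (2 * ·),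
          (⨅ u ∈ Icc (T m) (T (m + 1)), ρ (γ u)) * edist (γ (T m)) (γ (T (m + 1))) := by
        rw [Finset.sum_image fun i _ j _ hij => by lia]
        simp only [hTs, hTt]
    _ ≤ ∑ m ∈ Finset.range (2 * n + 1),
          (⨅ u ∈ Icc (T m) (T (m + 1)), ρ (γ u)) * edist (γ (T m)) (γ (T (m + 1))) := by
        refine Finset.sum_le_sum_of_subset (Finset.image_subset_iff.2 fun i hi => ?_)
        grind
    _ ≤ lowerLineIntegral ρ γ (s 0) (t n) :=
        le_iSup₂_of_le (2 * n + 1) T (le_iSup₂_of_le (hTs 0) (hTt n) (le_iSup_of_le hT le_rfl))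
    _ ≤ openLineIntegral ρ γ :=
        le_iSup₂_of_le (s 0) (t n) (le_iSup₂_of_le hs hTmono (le_iSup_of_le ht le_rfl))

end Crossing

/-! ### Moduli of ring families -/

section ShellDensity

variable {Y : Type*} {h : Y → ℝ} {α β : ℕ → ℝ} {c : ℕ → ℝ≥0∞} {k : ℕ}

/-- The test density for families of paths along which `h` traverses the levels `[α j, β j]`,
`j < k`: it equals `c j` on the shell `{α j ≤ h ≤ β j}` (the largest such `c j` where shells meet)
and vanishes off the shells. -/
def shellDensity (h : Y → ℝ) (α β : ℕ → ℝ) (c : ℕ → ℝ≥0∞) (k : ℕ) (y : Y) : ℝ≥0∞ :=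
  ⨆ j : Fin k, (h ⁻¹' Icc (α j) (β j)).indicator (fun _ => c j) y

theorem le_shellDensity {j : ℕ} (hj : j < k) {y : Y} (hy : h y ∈ Icc (α j) (β j)) :
    c j ≤ shellDensity h α β c k y :=
  le_iSup_of_le ⟨j, hj⟩ (indicator_of_mem (s := h ⁻¹' Icc (α j) (β j)) hy fun _ => c j).ge

theorem measurable_shellDensity [MeasurableSpace Y] (hh : Measurable h) :
    Measurable (shellDensity h α β c k) :=
  .iSup fun _ => measurable_const.indicator (hh measurableSet_Icc)

theorem lintegral_sq_shellDensity_le [MeasurableSpace Y] (ν : Measure Y) (hh : Measurable h) :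
    ∫⁻ y, shellDensity h α β c k y ^ 2 ∂ν ≤
      ∑ j ∈ Finset.range k, c j ^ 2 * ν (h ⁻¹' Icc (α j) (β j)) := by
  have hmeas (j : ℕ) : MeasurableSet (h ⁻¹' Icc (α j) (β j)) := hh measurableSet_Icc
  have hpoint (y : Y) : shellDensity h α β c k y ^ 2 ≤
      ∑ j ∈ Finset.range k, (h ⁻¹' Icc (α j) (β j)).indicator (fun _ => c j ^ 2) y := by
    rw [shellDensity, ENNReal.iSup_pow_of_ne_zero two_ne_zero]
    refine iSup_le fun j => ?_
    calc (h ⁻¹' Icc (α j) (β j)).indicator (fun _ => c j) y ^ 2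
        = (h ⁻¹' Icc (α j) (β j)).indicator (fun _ => c j ^ 2) y := by
          by_cases hy : y ∈ h ⁻¹' Icc (α j) (β j) <;> simp [hy]
      _ ≤ _ := Finset.single_le_sum
          (f := fun j : ℕ => (h ⁻¹' Icc (α j) (β j)).indicator (fun _ => c j ^ 2) y)
          (fun _ _ => zero_le) (Finset.mem_range.2 j.2)
  calc ∫⁻ y, shellDensity h α β c k y ^ 2 ∂ν
      ≤ ∫⁻ y, ∑ j ∈ Finset.range k, (h ⁻¹' Icc (α j) (β j)).indicator (fun _ => c j ^ 2) y ∂ν :=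
        lintegral_mono hpoint
    _ = ∑ j ∈ Finset.range k, c j ^ 2 * ν (h ⁻¹' Icc (α j) (β j)) := by
        rw [lintegral_finsetSum _ fun j _ => measurable_const.indicator (hmeas j)]
        exact Finset.sum_congr rfl fun j _ => lintegral_indicator_const (hmeas j) _

theorem sum_le_openLineIntegral_shellDensity [PseudoEMetricSpace Y] {γ : ℝ → Y}
    (hγ : ContinuousOn (h ∘ γ) (Icc 0 1)) (hαβ : ∀ j, α j ≤ β j) (hβα : ∀ j, β j ≤ α (j + 1))
    (h₀ : ∀ j < k, h (γ 0) < α j) (h₁ : ∀ j < k, β j < h (γ 1)) {w : ℕ → ℝ≥0∞}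
    (hw : ∀ j < k, ∀ y y', h y = α j → h y' = β j → w j ≤ c j * edist y y') :
    ∑ j ∈ Finset.range k, w j ≤ openLineIntegral (shellDensity h α β c k) γ := by
  obtain _ | n := k
  · simp
  have hcross (j : ℕ) : ∃ s t, j < n + 1 → 0 < s ∧ s ≤ t ∧ t < 1 ∧ h (γ s) = α j ∧
      h (γ t) = β j ∧ (∀ u ∈ Icc s t, h (γ u) ∈ Icc (α j) (β j)) ∧
      ∀ u ∈ Icc (0 : ℝ) 1, β j ≤ h (γ u) → t ≤ u := by
    by_cases hj : j < n + 1
    · obtain ⟨s, t, hst⟩ := exists_crossing hγ (h₀ j hj) (hαβ j) (h₁ j hj) zero_le_one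
      exact ⟨s, t, fun _ => hst⟩
    · exact ⟨0, 0, fun hj' => absurd hj' hj⟩
  choose s t hst using hcross
  refine le_trans (Finset.sum_le_sum fun j hj => ?_) (sum_range_le_openLineIntegral _ γ
    (hst 0 n.succ_pos).1 (hst n n.lt_succ_self).2.2.1 (fun j hj => (hst j (by lia)).2.1)
    fun j hj => ?_)
  · obtain ⟨-, -, -, hs, ht, hmem, -⟩ := hst j (Finset.mem_range.1 hj)
    refine (hw j (Finset.mem_range.1 hj) _ _ hs ht).trans ?_
    gcongr
    exact le_iInf₂ fun u hu => le_shellDensity (Finset.mem_range.1 hj) (hmem u hu)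
  · obtain ⟨hs₀, hst', ht₁, hs, -⟩ := hst (j + 1) (by lia)
    refine (hst j (by lia)).2.2.2.2.2.2 _ ⟨hs₀.le, (hst'.trans_lt ht₁).le⟩ ?_
    exact (hβα j).trans hs.ge

end ShellDensity

section RingModulus

variable {X Y : Type*} [MetricSpace X] [MeasurableSpace X] {μ : Measure X} {CD CW : ℝ≥0}
  {g : Y → X} {x₀ : X} {a b R : ℝ} {k : ℕ}

namespace IsWMDM

theorem ofReal_volRadius_le_mul_qmu (hw : IsWMDM μ 2 CW) (hd : IsDoublingWith μ CD) {x p p' : X}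
    {r : ℝ} {n : ℕ} (hp : 0 < dist p p') (hr : r + dist x p ≤ 2 ^ n * dist p p') :
    ENNReal.ofReal (volRadius μ x r) ≤ ENNReal.ofReal (√CD ^ n) * CW * qmu μ 2 p p' :=
  calc ENNReal.ofReal (volRadius μ x r)
      ≤ ENNReal.ofReal (√CD ^ n * volRadius μ p (dist p p')) :=
        ENNReal.ofReal_le_ofReal <| (hd.volRadius_mono (ball_subset_ball' hr)).trans
          (hd.volRadius_two_pow_mul_le p hp n)
    _ ≤ ENNReal.ofReal (√CD ^ n) * (CW * qmu μ 2 p p') := by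
        rw [ENNReal.ofReal_mul (by positivity)]
        gcongr
        exact hw.ofReal_volRadius_dist_le hd p p'
    _ = ENNReal.ofReal (√CD ^ n) * CW * qmu μ 2 p p' := (mul_assoc _ _ _).symm

theorem continuous_of_qmu_le_edist [PseudoEMetricSpace Y] (hw : IsWMDM μ 2 CW)
    (hd : IsDoublingWith μ CD) (hg : ∀ y y', qmu μ 2 (g y) (g y') ≤ edist y y') :
    Continuous g := by
  refine continuous_iff_continuousAt.2 fun y => Metric.tendsto_nhds.2 fun ε hε => ?_
  have hpos : 0 < ENNReal.ofReal (volRadius μ (g y) ε) / (CW + 1) :=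
    ENNReal.div_pos (ENNReal.ofReal_pos.2 (hd.volRadius_pos (g y) hε)).ne' (by simp)
  filter_upwards [Metric.eball_mem_nhds y hpos] with y' hy'
  by_contra! hfar
  have hlt : edist y' y * (CW + 1) < ENNReal.ofReal (volRadius μ (g y) ε) :=
    ENNReal.mul_lt_of_lt_div hy'
  refine hlt.not_ge ?_
  calc ENNReal.ofReal (volRadius μ (g y) ε)
      ≤ ENNReal.ofReal (volRadius μ (g y) (dist (g y) (g y'))) :=
        ENNReal.ofReal_le_ofReal <| hd.volRadius_mono <| ball_subset_ball <| by rwa [dist_comm]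
    _ ≤ CW * edist y y' := (hw.ofReal_volRadius_dist_le hd _ _).trans (by gcongr; exact hg y y')
    _ ≤ edist y' y * (CW + 1) := by
        rw [mul_comm, edist_comm]
        gcongr
        exact le_self_add

end IsWMDM

/-- The weight put on the shell `5/4 R ≤ dist p x₀ ≤ 7/4 R`: the constant density for which every
crossing of the shell has length at least `1 / k` in the weak metric. -/
def ringWeight (μ : Measure X) (CD CW : ℝ≥0) (x₀ : X) (k : ℕ) (R : ℝ) : ℝ≥0∞ :=
  ENNReal.ofReal (√CD ^ 3) * CW / (k * ENNReal.ofReal (volRadius μ x₀ (2 * R)))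

theorem inv_le_ringWeight_mul_edist [PseudoEMetricSpace Y] (hw : IsWMDM μ 2 CW)
    (hd : IsDoublingWith μ CD) (hg : ∀ y y', qmu μ 2 (g y) (g y') ≤ edist y y') (hR : 0 < R)
    {y y' : Y} (hy : dist (g y) x₀ = 5 / 4 * R) (hy' : dist (g y') x₀ = 7 / 4 * R) :
    (k : ℝ≥0∞)⁻¹ ≤ ringWeight μ CD CW x₀ k R * edist y y' := by
  have hdist : R / 2 ≤ dist (g y) (g y') := by
    linarith [dist_triangle_left (g y') x₀ (g y)]
  have hvol : ENNReal.ofReal (volRadius μ x₀ (2 * R)) ≤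
      ENNReal.ofReal (√CD ^ 3) * CW * edist y y' :=
    (hw.ofReal_volRadius_le_mul_qmu hd (n := 3) (by linarith [hdist, hR])
      (by linarith [dist_comm x₀ (g y)])).trans (by gcongr; exact hg y y')
  have hpos := ENNReal.ofReal_pos.2 (hd.volRadius_pos x₀ (by positivity : 0 < 2 * R))
  calc (k : ℝ≥0∞)⁻¹
      = 1 * ENNReal.ofReal (volRadius μ x₀ (2 * R)) /
          (k * ENNReal.ofReal (volRadius μ x₀ (2 * R))) := by
        rw [ENNReal.mul_div_mul_right _ _ hpos.ne' ENNReal.ofReal_ne_top, one_div]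
    _ ≤ ENNReal.ofReal (√CD ^ 3) * CW * edist y y' /
          (k * ENNReal.ofReal (volRadius μ x₀ (2 * R))) := by
        rw [one_mul]
        gcongr
    _ = ringWeight μ CD CW x₀ k R * edist y y' := ENNReal.mul_div_right_comm

theorem ringWeight_sq_mul_measure_ball (hd : IsDoublingWith μ CD) (hR : 0 < R) :
    ringWeight μ CD CW x₀ k R ^ 2 * μ (Metric.ball x₀ (2 * R)) = CW ^ 2 * CD ^ 3 / k ^ 2 := by
  have hpos := ENNReal.ofReal_pos.2 (hd.volRadius_pos x₀ (by positivity : 0 < 2 * R))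
  have hball : μ (Metric.ball x₀ (2 * R)) = ENNReal.ofReal (volRadius μ x₀ (2 * R)) ^ 2 := by
    rw [← ENNReal.ofReal_pow (volRadius_nonneg _ _), sq_volRadius,
      ofReal_measureReal (hd.measure_ball_ne_top _ _)]
  have hsqrt : ENNReal.ofReal (√CD ^ 3) ^ 2 = CD ^ 3 := by
    rw [← ENNReal.ofReal_pow (by positivity), ← pow_mul, pow_mul', Real.sq_sqrt CD.coe_nonneg,
      ENNReal.ofReal_pow CD.coe_nonneg, ENNReal.ofReal_coe_nnreal]
  rw [hball, ← mul_pow, ringWeight, ← ENNReal.mul_div_right_comm,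
    ENNReal.mul_div_mul_right _ _ hpos.ne' ENNReal.ofReal_ne_top, div_eq_mul_inv, mul_pow, mul_pow,
    hsqrt, mul_comm (CD ^ 3 : ℝ≥0∞), ← ENNReal.inv_pow, div_eq_mul_inv]

/-- The test density for the ring with radii `a` and `2 ^ k * a` about `x₀`, transported by `g`:
one shell at each of the scales `2 ^ j * a`, `j < k`. -/
def ringDensity (μ : Measure X) (CD CW : ℝ≥0) (g : Y → X) (x₀ : X) (a : ℝ) (k : ℕ) :
    Y → ℝ≥0∞ :=
  shellDensity (fun y => dist (g y) x₀) (fun j => 5 / 4 * (2 ^ j * a))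
    (fun j => 7 / 4 * (2 ^ j * a)) (fun j => ringWeight μ CD CW x₀ k (2 ^ j * a)) k

theorem one_le_openLineIntegral_ringDensity [PseudoEMetricSpace Y] (hw : IsWMDM μ 2 CW)
    (hd : IsDoublingWith μ CD) (hg : ∀ y y', qmu μ 2 (g y) (g y') ≤ edist y y') (ha : 0 < a)
    (hk : 0 < k) (hb : 2 ^ k * a ≤ b) {γ : ℝ → Y} (hγ : ContinuousOn γ (Icc 0 1))
    (h₀ : dist (g (γ 0)) x₀ ≤ a) (h₁ : b ≤ dist (g (γ 1)) x₀) :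
    1 ≤ openLineIntegral (ringDensity μ CD CW g x₀ a k) γ := by
  have hpos (j : ℕ) : 0 < 2 ^ j * a := by positivity
  have hcont : ContinuousOn ((fun y => dist (g y) x₀) ∘ γ) (Icc 0 1) :=
    ((hw.continuous_of_qmu_le_edist hd hg).dist continuous_const).comp_continuousOn hγ
  calc (1 : ℝ≥0∞) = ∑ _j ∈ Finset.range k, (k : ℝ≥0∞)⁻¹ := by
        rw [Finset.sum_const, Finset.card_range, nsmul_eq_mul,
          ENNReal.mul_inv_cancel (by simp [hk.ne']) (by simp)]
    _ ≤ openLineIntegral (ringDensity μ CD CW g x₀ a k) γ := by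
        refine sum_le_openLineIntegral_shellDensity hcont (fun j => ?_) (fun j => ?_)
          (fun j _ => ?_) (fun j hj => ?_)
          fun j _ y y' hy hy' => inv_le_ringWeight_mul_edist hw hd hg (hpos j) hy hy'
        · linarith [hpos j]
        · rw [pow_succ]
          linarith [hpos j]
        · have : a ≤ 2 ^ j * a := le_mul_of_one_le_left ha.le (one_le_pow₀ one_le_two)
          linarith [hpos j]
        · have : 2 ^ (j + 1) * a ≤ 2 ^ k * a := by
            gcongr
            exacts [one_le_two, hj]
          rw [pow_succ] at this
          linarith [hpos j]

theorem lintegral_sq_ringDensity_le [MeasurableSpace Y] (hd : IsDoublingWith μ CD)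
    (hg : Measurable fun y => dist (g y) x₀) (ha : 0 < a) (hk : 0 < k) {ν : Measure Y}
    {c : ℝ≥0∞} (hν : ∀ r, ν (g ⁻¹' Metric.ball x₀ r) ≤ c * μ (Metric.ball x₀ r)) :
    ∫⁻ y, ringDensity μ CD CW g x₀ a k y ^ 2 ∂ν ≤ CW ^ 2 * CD ^ 3 * c / k := by
  have hshell (j : ℕ) : ringWeight μ CD CW x₀ k (2 ^ j * a) ^ 2 *
      ν ((fun y => dist (g y) x₀) ⁻¹' Icc (5 / 4 * (2 ^ j * a)) (7 / 4 * (2 ^ j * a))) ≤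
      CW ^ 2 * CD ^ 3 / k ^ 2 * c := by
    have hR : 0 < 2 ^ j * a := by positivity
    rw [← ringWeight_sq_mul_measure_ball (x₀ := x₀) hd hR, mul_assoc, mul_comm (μ _)]
    gcongr
    refine (measure_mono fun y hy => ?_).trans (hν _)
    exact mem_ball.2 (hy.2.trans_lt (by linarith))
  have hk₀ : (k : ℝ≥0∞) ≠ 0 := by simp [hk.ne']
  calc ∫⁻ y, ringDensity μ CD CW g x₀ a k y ^ 2 ∂ν
      ≤ ∑ _j ∈ Finset.range k, CW ^ 2 * CD ^ 3 / (k : ℝ≥0∞) ^ 2 * c :=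
        (lintegral_sq_shellDensity_le ν hg).trans (Finset.sum_le_sum fun j _ => hshell j)
    _ = k * (CW ^ 2 * CD ^ 3 * c) / (k * k) := by
        rw [Finset.sum_const, Finset.card_range, nsmul_eq_mul, ← ENNReal.mul_div_right_comm,
          ← mul_div_assoc, sq (k : ℝ≥0∞)]
    _ = CW ^ 2 * CD ^ 3 * c / k :=
        ENNReal.mul_div_mul_left _ _ hk₀ (ENNReal.natCast_ne_top k)

theorem modulusH2_ring_le [EMetricSpace Y] (hw : IsWMDM μ 2 CW)
    (hd : IsDoublingWith μ CD) (hg : ∀ y y', qmu μ 2 (g y) (g y') ≤ edist y y') (ha : 0 < a)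
    (hk : 0 < k) (hb : 2 ^ k * a ≤ b) {c : ℝ≥0∞}
    (hc : ∀ r, hausdorff2 Y (g ⁻¹' Metric.ball x₀ r) ≤ c * μ (Metric.ball x₀ r)) :
    modulusH2 {γ : ℝ → Y | ContinuousOn γ (Icc 0 1) ∧ dist (g (γ 0)) x₀ ≤ a ∧
      b ≤ dist (g (γ 1)) x₀} ≤ CW ^ 2 * CD ^ 3 * c / k := by
  let : MeasurableSpace Y := borel Y
  have : BorelSpace Y := ⟨rfl⟩
  have hgm : Measurable fun y => dist (g y) x₀ :=
    ((hw.continuous_of_qmu_le_edist hd hg).dist continuous_const).measurable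
  refine iInf₂_le_of_le (ringDensity μ CD CW g x₀ a k) (measurable_shellDensity hgm)
    (iInf_le_of_le ?_ (lintegral_sq_ringDensity_le hd hgm ha hk hc))
  exact fun γ hγ _ => one_le_openLineIntegral_ringDensity hw hd hg ha hk hb hγ.1 hγ.2.1 hγ.2.2

end RingModulus

/-! ### Metric surfaces -/

section Surface

/-- The atlas of an open subset of the sphere, pulled back along a homeomorphism. -/
abbrev chartedSpaceOfHomeomorph {X : Type*} [TopologicalSpace X] [Nonempty X] {Ω : Set ↥Sphere2}
    (hΩ : IsOpen Ω) (h : X ≃ₜ Ω) : ChartedSpace (EuclideanSpace ℝ (Fin 2)) X :=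
  have : Fact (Module.finrank ℝ (EuclideanSpace ℝ (Fin 3)) = 2 + 1) := ⟨by simp⟩
  letI := (hΩ.isOpenEmbedding_subtypeVal.comp h.isOpenEmbedding).singletonChartedSpace
  ChartedSpace.comp (EuclideanSpace ℝ (Fin 2)) Sphere2 X

theorem hausdorff2_image_le {X Y : Type*} [MetricSpace X] [MeasurableSpace X]
    [OpensMeasurableSpace X] [ChartedSpace (EuclideanSpace ℝ (Fin 2)) X] [EMetricSpace Y]
    {μ : Measure X} {CD CW : ℝ≥0} (hd : IsDoublingWith μ CD) (hw : IsWMDM μ 2 CW) {lam : ℝ}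
    (hlam : 1 ≤ lam) (hX : IsLLC X lam) {f : X → Y}
    (hf : ∀ x y, edist (f x) (f y) ≤ qmu μ 2 x y) {O : Set X} (hO : IsOpen O) :
    hausdorff2 Y (f '' O) ≤
      ENNReal.ofReal Real.pi * (8 * CW * CD ^ (7 + ellOf lam)) ^ 2 * CD ^ 3 * μ O := by
  have : PerfectSpace X := perfectSpace_of_chartedSpace (EuclideanSpace ℝ (Fin 2)) X
  let : MeasurableSpace Y := borel Y
  have : BorelSpace Y := ⟨rfl⟩
  have hrank : 1 < Module.rank ℝ (EuclideanSpace ℝ (Fin 2)) :=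
    Module.one_lt_rank_of_one_lt_finrank (by simp)
  have hpi : ENNReal.ofReal (Real.pi / 4) * 2 ^ 2 = ENNReal.ofReal Real.pi := by
    rw [← ENNReal.ofReal_ofNat 2, ← ENNReal.ofReal_pow zero_le_two,
      ← ENNReal.ofReal_mul (by positivity)]
    ring_nf
  calc hausdorff2 Y (f '' O) = ENNReal.ofReal (Real.pi / 4) * μH[2] (f '' O) := rfl
    _ ≤ ENNReal.ofReal (Real.pi / 4) *
          ((2 * (8 * CW * CD ^ (7 + ellOf lam))) ^ 2 * CD ^ 3 * μ O) := by
        gcongr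
        exact hd.hausdorffMeasure_image_le zero_lt_two (by finiteness)
          (hd.eventually_ediam_image_ball_sq_le hw hrank hlam hX hf) hO
    _ = _ := by
        rw [← hpi]
        ring

theorem modulus_bound_le_CSconst {lam : ℝ} {CD CW : ℝ≥0} (hCD : 1 ≤ CD) (k : ℕ) :
    ENNReal.ofReal Real.pi * CW ^ 2 * (8 * CW * CD ^ (7 + ellOf lam)) ^ 2 * CD ^ 6 / k ≤
      ENNReal.ofReal (2 * Real.pi) * CW ^ 2 * CSconst lam CD CW ^ 2 * CD ^ 6 / k := by
  have hCS : 8 * CW * CD ^ (7 + ellOf lam) ≤ CSconst lam CD CW := by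
    unfold CSconst
    gcongr
    · norm_num
    · exact mod_cast hCD
    · lia
    · lia
  gcongr
  linarith [Real.pi_pos]

end Surface

theorem statement17_general
    {X : Type*} [MetricSpace X] [ChartedSpace (EuclideanSpace ℝ (Fin 2)) X]
    [MeasurableSpace X] [OpensMeasurableSpace X] {lam : ℝ} {CD CW : ℝ≥0} {μ : Measure X}
    (hlam : 1 ≤ lam) (hLLC : IsLLC X lam) (hdbl : IsDoublingWith μ CD) (hw : IsWMDM μ 2 CW)
    {Y : Type*} [EMetricSpace Y] (e : X ≃ Y)
    (hq : ∀ x y : X, edist (e x) (e y) = qmu μ 2 x y)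
    (x₀ : X) {a b : ℝ} (ha : 0 < a) {k : ℕ} (hk : 0 < k) (hb : 2 ^ k * a ≤ b) :
    modulusH2 {γ : ℝ → Y | ContinuousOn γ (Set.Icc 0 1) ∧
        γ 0 ∈ (fun p => e p) '' Metric.closedBall x₀ a ∧
        γ 1 ∈ (fun p => e p) '' (Metric.ball x₀ b)ᶜ} ≤
      ENNReal.ofReal Real.pi * CW ^ 2 * (8 * CW * CD ^ (7 + ellOf lam)) ^ 2 * CD ^ 6 / k := by
  have hsymm : ∀ y y', qmu μ 2 (e.symm y) (e.symm y') ≤ edist y y' := fun y y' => by simp [← hq]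
  have harea (r : ℝ) : hausdorff2 Y (e.symm ⁻¹' Metric.ball x₀ r) ≤
      ENNReal.ofReal Real.pi * (8 * CW * CD ^ (7 + ellOf lam)) ^ 2 * CD ^ 3 *
        μ (Metric.ball x₀ r) := by
    rw [← e.image_eq_preimage_symm]
    exact hausdorff2_image_le hdbl hw hlam hLLC (fun x y => (hq x y).le) isOpen_ball
  convert modulusH2_ring_le hw hdbl hsymm ha hk hb harea using 1
  · congr! 3 with γ
    simp [Equiv.image_eq_preimage_symm]
  · congr 1
    ring

theorem statement17
    {X : Type*} [MetricSpace X] [MeasurableSpace X] [BorelSpace X]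
    (lam : ℝ) (CD CW : ℝ≥0) (M : ℕ) (μ : Measure X)
    (hlam : 1 ≤ lam) (hLLC : IsLLC X lam)
    (hhom : ∃ Ω₀ : Set ↥Sphere2, IsCircleDomainS2 Ω₀ ∧ Nonempty (X ≃ₜ ↥Ω₀))
    (hcpt : CompactSpace (Completion X))
    (hfin : (residComps X).Finite) (hM : (residComps X).ncard = M)
    (hreg : μ.Regular) (hdbl : IsDoublingWith μ CD) (hw : IsWMDM μ 2 CW)
    {Y : Type*} [MetricSpace Y] (e : X ≃ Y)
    (hq : ∀ x y : X, edist (e x) (e y) = qmu μ 2 x y)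
    (x₀ : X) (A B : ℝ) (hA : 0 < A) (hB : 4 * lam ^ 2 * A ≤ B)
    (k : ℕ) (hk2 : 2 ≤ k)
    (hk : 2 ^ k * lam ^ 2 * A ≤ B) (hk' : B < 2 ^ (k + 1) * lam ^ 2 * A) :
    modulusH2 {γ : ℝ → Y | ContinuousOn γ (Set.Icc 0 1) ∧
        γ 0 ∈ (fun p => e p) '' Metric.closedBall x₀ (lam * A) ∧
        γ 1 ∈ (fun p => e p) '' (Metric.ball x₀ (B / lam))ᶜ} ≤
      ENNReal.ofReal (2 * Real.pi) * (CW : ℝ≥0∞) ^ 2 * CSconst lam CD CW ^ 2 *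
        (CD : ℝ≥0∞) ^ 6 / (k : ℝ≥0∞) := by
  obtain ⟨Ω, hΩ, ⟨h⟩⟩ := hhom
  have : Nonempty X := ⟨x₀⟩
  let := chartedSpaceOfHomeomorph hΩ.1 h
  have hlam₀ : 0 < lam := zero_lt_one.trans_le hlam
  have hring : 2 ^ k * (lam * A) ≤ B / lam := by
    rw [le_div_iff₀ hlam₀]
    linarith
  exact (statement17_general hlam hLLC hdbl hw e hq x₀ (mul_pos hlam₀ hA) (by lia) hring).trans
    (modulus_bound_le_CSconst hdbl.one_le k)

end
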